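/- arXiv:1703.00766 — 3 statements merged into one kernel-verified Lean document; each statement's English description precedes it below -/
import Mathlib

section
/- Let R be a Noetherian ring, 𝔞 an ideal with dim R/𝔞 = 1, and M an R-module with Supp(M) ⊆ V(𝔞). If Ext^i_R(R/𝔞, M) is finitely generated for all i ≤ cd(𝔞, M) + 1, then Ext^i_R(R/𝔞, M) is finitely generated for all i ≥ 0, i.e., M is 𝔞-cofinite. -/
open CategoryTheory

universe u

variable (R : Type u) [CommRing R]

/-- The `i`-th Ext module `Ext^i_R(N, M)` of `R`-modules. -/
noncomputable def extModule (i : ℕ) (N M : ModuleCat.{u} R) : ModuleCat.{u} R :=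
  ((Ext R (ModuleCat.{u} R) i).obj (Opposite.op N)).obj M

/-- A module is weakly Laskerian if every quotient has finitely many associated primes. -/
def IsWeaklyLaskerian (M : Type u) [AddCommGroup M] [Module R M] : Prop :=
  ∀ N : Submodule R M, (associatedPrimes R (M ⧸ N)).Finite

/-- `M` is `𝔞`-cofinite: `Supp M ⊆ V(𝔞)` and all `Ext^i_R(R/𝔞, M)` are finitely generated. -/
def IsCofinite (𝔞 : Ideal R) (M : ModuleCat.{u} R) : Prop :=
  Module.support R M ⊆ PrimeSpectrum.zeroLocus (𝔞 : Set R) ∧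
    ∀ i : ℕ, Module.Finite R (extModule R i (ModuleCat.of R (R ⧸ 𝔞)) M)

/-- `M` is `𝔞`-weakly cofinite: `Supp M ⊆ V(𝔞)` and all `Ext^i_R(R/𝔞, M)` are weakly
Laskerian. -/
def IsWeaklyCofinite (𝔞 : Ideal R) (M : ModuleCat.{u} R) : Prop :=
  Module.support R M ⊆ PrimeSpectrum.zeroLocus (𝔞 : Set R) ∧
    ∀ i : ℕ, IsWeaklyLaskerian R (extModule R i (ModuleCat.of R (R ⧸ 𝔞)) M)

/-- The Krull dimension of the support of a module. -/
noncomputable def suppDim (M : Type u) [AddCommGroup M] [Module R M] : WithBot ℕ∞ :=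
  Order.krullDim (Module.support R M)

/-- The cohomological dimension `cd(𝔞, M) = sup {i | H^i_𝔞(M) ≠ 0}`, as an element of `ℕ∞`. -/
noncomputable def cohomologicalDim (𝔞 : Ideal R) (M : ModuleCat.{u} R) : ℕ∞ :=
  ⨆ i ∈ {i : ℕ | Nontrivial ((localCohomology 𝔞 i).obj M)}, (i : ℕ∞)

/-- `p` is an attached prime of `M`: `p` is prime and is the annihilator of a quotient
of `M`. -/
def IsAttachedPrime (M : Type u) [AddCommGroup M] [Module R M] (p : Ideal R) : Prop :=
  p.IsPrime ∧ ∃ N : Submodule R M, p = Module.annihilator R (M ⧸ N)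

section PureAlgebra

/-- A module which is `x`-power torsion and whose `x`-socle is Artinian is Artinian. -/
theorem aux_artinian_of_ker {A : Type u} [CommRing A] {L : Type u} [AddCommGroup L] [Module A L]
    (x : A) (T : Submodule A L) [IsArtinian A T] (hT : ∀ l : L, x • l = 0 → l ∈ T)
    (htor : ∀ l : L, ∃ n : ℕ, x ^ n • l = 0) : IsArtinian A L := by
  rw [← monotone_stabilizes_iff_artinian]
  intro f
  let N : ℕ → Submodule A L := fun k => OrderDual.ofDual (f k)
  have hN : ∀ {k l : ℕ}, k ≤ l → N l ≤ N k := fun h => f.monotone h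
  -- the double sequence
  let B : ℕ → ℕ → Submodule A T := fun j k =>
    ((N k).map (LinearMap.lsmul A L (x ^ j)) ⊓ LinearMap.ker (LinearMap.lsmul A L x)).comap T.subtype
  have memB : ∀ j k (t : T), t ∈ B j k ↔ (∃ n ∈ N k, x ^ j • n = (t : L)) ∧ x • (t : L) = 0 := by
    intro j k t
    simp [B]
  have hBk : ∀ j {k l : ℕ}, k ≤ l → B j l ≤ B j k := by
    intro j k l h t ht
    rw [memB] at ht ⊢
    obtain ⟨⟨n, hn, e⟩, h0⟩ := ht
    exact ⟨⟨n, hN h hn, e⟩, h0⟩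
  have hBj : ∀ {i j : ℕ} k, i ≤ j → B j k ≤ B i k := by
    intro i j k h t ht
    rw [memB] at ht ⊢
    obtain ⟨⟨n, hn, e⟩, h0⟩ := ht
    refine ⟨⟨x ^ (j - i) • n, (N k).smul_mem _ hn, ?_⟩, h0⟩
    rw [smul_smul, ← pow_add, Nat.add_sub_cancel' h, e]
  -- diagonal stabilisation
  obtain ⟨n₀, hn₀⟩ := IsArtinian.monotone_stabilizes (R := A) (M := T)
    ⟨fun n => OrderDual.toDual (B n n), fun a b h => by
      exact (hBj b h).trans (hBk a h)⟩
  have hn₀' : ∀ m, n₀ ≤ m → B n₀ n₀ = B m m := hn₀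
  have key : ∀ j k, n₀ ≤ j → n₀ ≤ k → B j k = B n₀ n₀ := by
    intro j k hj hk
    apply le_antisymm
    · exact (hBj k hj).trans (hBk n₀ hk)
    · rw [hn₀' (max j k) (le_trans hj (le_max_left _ _))]
      exact (hBj _ (le_max_left _ _)).trans (hBk _ (le_max_right _ _))
  have hcol : ∀ j, ∃ n, ∀ m, n ≤ m → B j n = B j m := by
    intro j
    obtain ⟨n, hn⟩ := IsArtinian.monotone_stabilizes (R := A) (M := T)
      ⟨fun n => OrderDual.toDual (B j n), fun a b h => hBk j h⟩
    exact ⟨n, hn⟩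
  choose c hc using hcol
  let k1 := max n₀ ((Finset.range n₀).sup c)
  have hk1 : ∀ j m, k1 ≤ m → B j k1 = B j m := by
    intro j m hm
    rcases lt_or_ge j n₀ with hj | hj
    · have h1 : c j ≤ k1 :=
        le_trans (Finset.le_sup (f := c) (Finset.mem_range.mpr hj)) (le_max_right _ _)
      rw [← hc j k1 h1, ← hc j m (h1.trans hm)]
    · have h1 : n₀ ≤ k1 := le_max_left _ _
      rw [key j k1 hj h1, key j m hj (h1.trans hm)]
  refine ⟨k1, fun m hm => ?_⟩
  have : N k1 = N m := by
    apply le_antisymm _ (hN hm)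
    have : ∀ j : ℕ, ∀ z ∈ N k1, x ^ j • z = 0 → z ∈ N m := by
      intro j
      induction j with
      | zero => intro z _ h0; simp at h0; rw [h0]; exact (N m).zero_mem
      | succ j ih =>
        intro z hz h0
        have hx : x • (x ^ j • z) = 0 := by rw [smul_smul, ← pow_succ', h0]
        have h1 : (⟨x ^ j • z, hT _ hx⟩ : T) ∈ B j k1 := by
          rw [memB]; exact ⟨⟨z, hz, rfl⟩, hx⟩
        rw [hk1 j m hm, memB] at h1
        obtain ⟨⟨w, hw, e⟩, -⟩ := h1
        have h2 := ih (z - w) ((N k1).sub_mem hz (hN hm hw)) (by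
          rw [smul_sub, e]; simp)
        simpa using (N m).add_mem h2 hw
    intro z hz
    obtain ⟨n, hn⟩ := htor z
    exact this n z hz hn
  exact this

theorem aux_artinian_of_socle {A : Type u} [CommRing A] [IsNoetherianRing A] (I : Ideal A)
    {L : Type u} [AddCommGroup L] [Module A L]
    (T : Submodule A L) [IsArtinian A T] (hT : ∀ l : L, (∀ x ∈ I, x • l = 0) → l ∈ T)
    (htor : ∀ x ∈ I, ∀ l : L, ∃ n : ℕ, x ^ n • l = 0) : IsArtinian A L := by
  have main : ∀ J : Ideal A, J ≤ I → IsArtinian A (Submodule.torsionBySet A L (J : Set A)) := by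
    intro J
    induction J using WellFoundedGT.induction with
    | ind J ih =>
      intro hJ
      by_cases hIJ : I ≤ J
      · apply isArtinian_of_le (t := T)
        intro l hl
        rw [Submodule.mem_torsionBySet_iff] at hl
        exact hT l fun x hx => hl ⟨x, hIJ hx⟩
      · obtain ⟨x, hxI, hxJ⟩ := SetLike.not_le_iff_exists.mp hIJ
        have hlt : J < J ⊔ Ideal.span {x} := by
          rw [left_lt_sup, Ideal.span_singleton_le_iff_mem]; exact hxJ
        have hA := ih _ hlt (sup_le hJ (by rwa [Ideal.span_singleton_le_iff_mem]))
        have : IsArtinian A ((Submodule.torsionBySet A L ((J ⊔ Ideal.span {x} : Ideal A) : Set A)).comap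
            (Submodule.torsionBySet A L (J : Set A)).subtype) := by
          let g := (Submodule.torsionBySet A L (J : Set A)).subtype.submoduleComap
            (Submodule.torsionBySet A L ((J ⊔ Ideal.span {x} : Ideal A) : Set A))
          apply isArtinian_of_injective g
          intro a b hab
          apply Subtype.ext; apply Subtype.ext
          exact congrArg (fun z : Submodule.torsionBySet A L
            ((J ⊔ Ideal.span {x} : Ideal A) : Set A) => (z : L)) hab
        refine aux_artinian_of_ker x ((Submodule.torsionBySet A L
          ((J ⊔ Ideal.span {x} : Ideal A) : Set A)).comap
            (Submodule.torsionBySet A L (J : Set A)).subtype) (fun l hl => ?_) (fun l => ?_)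
        · rw [Submodule.mem_comap, Submodule.mem_torsionBySet_iff]
          rintro ⟨a, ha⟩
          obtain ⟨b, hb, c, hc, rfl⟩ := Submodule.mem_sup.mp ha
          obtain ⟨d, rfl⟩ := Ideal.mem_span_singleton'.mp hc
          have h1 : b • (l : L) = 0 := (Submodule.mem_torsionBySet_iff _ _).mp l.2 ⟨b, hb⟩
          have h2 : x • (l : L) = 0 := congrArg Subtype.val hl
          change (b + d * x) • (l : L) = 0
          rw [add_smul, h1, mul_smul, h2]; simp
        · obtain ⟨n, hn⟩ := htor x hxI (l : L)
          exact ⟨n, Subtype.ext hn⟩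
  have h := main ⊥ bot_le
  let g : L →ₗ[A] Submodule.torsionBySet A L ((⊥ : Ideal A) : Set A) :=
    LinearMap.codRestrict _ LinearMap.id (fun l => by
      rw [Submodule.mem_torsionBySet_iff]
      rintro ⟨a, ha⟩
      have : a = 0 := ha
      simp [this])
  exact isArtinian_of_injective g fun a b hab => congrArg Subtype.val hab

theorem aux_artinian_of_fg {A : Type u} [CommRing A] [IsNoetherianRing A] (J : Ideal A)
    (hJ : ∀ q : Ideal A, q.IsPrime → J ≤ q → q.IsMaximal)
    {N : Type u} [AddCommGroup N] [Module A N] [Module.Finite A N]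
    (hN : ∀ x ∈ J, ∀ n : N, x • n = 0) : IsArtinian A N := by
  have h0 : Ring.KrullDimLE 0 (A ⧸ J) := Ring.krullDimLE_zero_iff.mpr fun q hq => by
    have h1 : (q.comap (Ideal.Quotient.mk J)).IsMaximal := by
      apply hJ _ (hq.comap _)
      intro a ha
      rw [Ideal.mem_comap, Ideal.Quotient.eq_zero_iff_mem.mpr ha]
      exact q.zero_mem
    have := Ideal.map_eq_top_or_isMaximal_of_surjective (Ideal.Quotient.mk J)
      Ideal.Quotient.mk_surjective h1
    rw [Ideal.map_comap_of_surjective _ Ideal.Quotient.mk_surjective] at this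
    exact this.resolve_left hq.ne_top
  have : IsArtinianRing (A ⧸ J) := isArtinianRing_iff_isNoetherianRing_krullDimLE_zero.mpr
    ⟨inferInstance, h0⟩
  have ht : Module.IsTorsionBySet A N (J : Set A) := fun n x => hN x x.2 n
  let := ht.module
  have : IsScalarTower A (A ⧸ J) N := ht.isScalarTower
  have : Module.Finite (A ⧸ J) N := Module.Finite.of_restrictScalars_finite A _ _
  have : IsArtinian (A ⧸ J) N := inferInstance
  exact isArtinian_of_surjective_algebraMap (R := A ⧸ J) Ideal.Quotient.mk_surjective

theorem aux_prime {A : Type u} [CommRing A] (I : Ideal A) (hdim : ringKrullDim (A ⧸ I) ≤ 1)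
    (q : Ideal A) (hq : q.IsPrime) (hIq : I ≤ q) : q ∈ I.minimalPrimes ∨ q.IsMaximal := by
  by_contra! hcon
  obtain ⟨p, hp, hpq⟩ := Ideal.exists_minimalPrimes_le hIq
  have hlt : p < q := lt_of_le_of_ne hpq (by rintro rfl; exact hcon.1 hp)
  obtain ⟨m, hm, hqm⟩ := Ideal.exists_le_maximal q hq.ne_top
  have hlt2 : q < m := lt_of_le_of_ne hqm (by rintro rfl; exact hcon.2 hm)
  have h1 : Ring.KrullDimLE 1 (A ⧸ I) := by
    rw [Ring.krullDimLE_iff]; exact_mod_cast hdim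
  rw [Ring.krullDimLE_one_iff] at h1
  have hcm : ∀ r : Ideal A, I ≤ r → (r.map (Ideal.Quotient.mk I)).comap (Ideal.Quotient.mk I) = r := by
    intro r hr
    rw [Ideal.comap_map_of_surjective _ Ideal.Quotient.mk_surjective]
    rw [sup_eq_left]
    intro a ha
    exact hr (Ideal.Quotient.eq_zero_iff_mem.mp ha)
  have hpr : ∀ r : Ideal A, I ≤ r → r.IsPrime → (r.map (Ideal.Quotient.mk I)).IsPrime := by
    intro r hr hr'
    apply Ideal.map_isPrime_of_surjective Ideal.Quotient.mk_surjective
    rwa [Ideal.mk_ker]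
  rcases h1 _ (hpr q hIq hq) with h | h
  · have h2 := h.2 (y := p.map (Ideal.Quotient.mk I)) ⟨hpr p hp.1.2 hp.1.1, bot_le⟩
      (Ideal.map_mono hpq)
    have h3 := Ideal.comap_mono (f := Ideal.Quotient.mk I) h2
    rw [hcm q hIq, hcm p hp.1.2] at h3
    exact absurd h3 (not_le_of_gt hlt)
  · have h3 : (q.map (Ideal.Quotient.mk I)) = m.map (Ideal.Quotient.mk I) :=
      h.eq_of_le (hpr m (hIq.trans hqm) hm.isPrime).ne_top (Ideal.map_mono hqm)
    have h4 := congrArg (Ideal.comap (Ideal.Quotient.mk I)) h3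
    rw [hcm q hIq, hcm m (hIq.trans hqm)] at h4
    exact hlt2.ne h4

/-- elements outside every minimal prime of `I` -/
def auxS {A : Type u} [CommRing A] (I : Ideal A) : Submonoid A where
  carrier := {s | ∀ p ∈ I.minimalPrimes, s ∉ p}
  one_mem' := fun p hp h => hp.1.1.ne_top ((Ideal.eq_top_iff_one p).mpr h)
  mul_mem' := fun {a b} ha hb p hp h => (hp.1.1.mem_or_mem h).elim (ha p hp) (hb p hp)

theorem aux_localized_artinian {A : Type u} [CommRing A] [IsNoetherianRing A] (I : Ideal A)
    {M : Type u} [AddCommGroup M] [Module A M]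
    (htor : ∀ x ∈ I, ∀ l : M, ∃ n : ℕ, x ^ n • l = 0)
    (hfin : (Submodule.torsionBySet A M (I : Set A)).FG) :
    IsArtinian (Localization (auxS I)) (LocalizedModule (auxS I) M) := by
  set S := auxS I with hS
  let I' := I.map (algebraMap A (Localization S))
  have hI' : ∀ y ∈ I', ∃ a ∈ I, ∃ s : S, y = Localization.mk a s := by
    intro y hy
    rw [IsLocalization.mem_map_algebraMap_iff S] at hy
    obtain ⟨⟨a, s⟩, h⟩ := hy
    refine ⟨a, a.2, s, ?_⟩
    rw [Localization.mk_eq_mk', eq_comm, IsLocalization.mk'_eq_iff_eq_mul]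
    exact h.symm
  -- the candidate socle
  obtain ⟨G, hG⟩ := hfin
  let T : Submodule (Localization S) (LocalizedModule S M) :=
    Submodule.span _ ((fun m => LocalizedModule.mk m (1 : S)) '' (G : Set M))
  have hTfg : Module.Finite (Localization S) T := by
    apply Module.Finite.span_of_finite
    exact (G.finite_toSet).image _
  have hmemT : ∀ m ∈ Submodule.torsionBySet A M (I : Set A), LocalizedModule.mk m (1 : S) ∈ T := by
    intro m hm
    rw [← hG] at hm
    induction hm using Submodule.span_induction with
    | mem y hy => exact Submodule.subset_span ⟨y, hy, rfl⟩
    | zero => rw [LocalizedModule.zero_mk]; exact T.zero_mem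
    | add a b _ _ ha hb =>
      have := T.add_mem ha hb
      simpa [LocalizedModule.mk_add_mk] using this
    | smul r a _ ha =>
      have := T.smul_mem (Localization.mk r (1 : S)) ha
      simpa [LocalizedModule.mk_smul_mk] using this
  have hTI : ∀ x ∈ I', ∀ t : T, x • t = 0 := by
    intro x hx ⟨t, ht⟩
    apply Subtype.ext
    change x • t = 0
    obtain ⟨a, ha, s, rfl⟩ := hI' x hx
    induction ht using Submodule.span_induction with
    | mem y hy =>
      obtain ⟨g, hg, rfl⟩ := hy
      have hg' : g ∈ Submodule.torsionBySet A M (I : Set A) := hG ▸ Submodule.subset_span hg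
      have : a • g = 0 := (Submodule.mem_torsionBySet_iff _ _).mp hg' ⟨a, ha⟩
      simp [LocalizedModule.mk_smul_mk, this]
    | zero => simp
    | add u v _ _ hu hv => rw [smul_add, hu, hv, add_zero]
    | smul r u _ hu => rw [smul_comm, hu, smul_zero]
  have hTart : IsArtinian (Localization S) T := by
    have : IsNoetherianRing (Localization S) := IsLocalization.isNoetherianRing S _ inferInstance
    refine aux_artinian_of_fg I' (fun q hq hle => ?_) hTI
    -- primes above I' are maximal
    have hmin : ∀ r : Ideal (Localization S), r.IsPrime → I' ≤ r →
        r.comap (algebraMap A (Localization S)) ∈ I.minimalPrimes := by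
      intro r hr hler
      have hd : Disjoint (S : Set A) (r.comap (algebraMap A (Localization S)) : Set A) :=
        ((IsLocalization.isPrime_iff_isPrime_disjoint S _ r).mp hr).2
      have hle2 : I ≤ r.comap (algebraMap A (Localization S)) := Ideal.map_le_iff_le_comap.mp hler
      obtain ⟨p, hp, hle3⟩ := (Ideal.subset_union_prime_finite (s := I.minimalPrimes)
        (I.finite_minimalPrimes_of_isNoetherianRing A) (f := id) 0 0
          (fun i hi _ _ => hi.1.1) (I := r.comap (algebraMap A (Localization S)))).mp (by
          intro a ha
          by_contra hcon
          have haS : a ∈ (S : Set A) := fun p hp hap => hcon (Set.mem_biUnion hp hap)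
          exact Set.disjoint_left.mp hd haS ha)
      have : r.comap (algebraMap A (Localization S)) = p :=
        le_antisymm hle3 (hp.2 ⟨hr.comap _, hle2⟩ hle3)
      rw [this]; exact hp
    obtain ⟨m, hm, hqm⟩ := Ideal.exists_le_maximal q hq.ne_top
    have h1 := hmin q hq hle
    have h2 := hmin m hm.isPrime (hle.trans hqm)
    have h3 : q.comap (algebraMap A (Localization S)) = m.comap (algebraMap A (Localization S)) :=
      le_antisymm (Ideal.comap_mono hqm) (h2.2 h1.1 (Ideal.comap_mono hqm))
    have h4 : q = m := by
      have e1 := IsLocalization.map_under S (Localization S) q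
      have e2 := IsLocalization.map_under S (Localization S) m
      rw [← e1, ← e2]
      exact congrArg _ h3
    rw [h4]; exact hm
  have : IsNoetherianRing (Localization S) := IsLocalization.isNoetherianRing S _ inferInstance
  refine aux_artinian_of_socle I' T (fun l hl => ?_) (fun x hx l => ?_)
  · induction l using LocalizedModule.induction_on with
    | h m s =>
      obtain ⟨F, hF⟩ := (inferInstance : IsNoetherianRing A).noetherian I
      have h1 : ∀ a ∈ I, ∃ t : S, t • (a • m) = 0 := by
        intro a ha
        have := hl _ (Ideal.mem_map_of_mem _ ha)
        rw [← Localization.mk_one_eq_algebraMap, LocalizedModule.mk_smul_mk, one_mul,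
          ← LocalizedModule.zero_mk s, LocalizedModule.mk_eq] at this
        obtain ⟨u, hu⟩ := this
        refine ⟨u * s, ?_⟩
        rw [mul_smul]
        simpa using hu
      choose! t ht using h1
      classical
      let w : S := ∏ a ∈ F, t a
      have hw : w • m ∈ Submodule.torsionBySet A M (I : Set A) := by
        rw [Submodule.mem_torsionBySet_iff]
        rintro ⟨a, ha⟩
        change a • (w • m) = 0
        have ha' : a ∈ Submodule.span A (F : Set A) := hF ▸ ha
        induction ha' using Submodule.span_induction with
        | mem b hb =>
          have hbI : b ∈ I := hF ▸ Submodule.subset_span hb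
          have h5 : w = (∏ c ∈ F.erase b, t c) * t b := (Finset.prod_erase_mul F t hb).symm
          rw [smul_comm, h5, mul_smul, ht b hbI, smul_zero]
        | zero => simp
        | add b c hb hc h1 h2 =>
          rw [add_smul, h1 (by rw [← hF]; exact hb), h2 (by rw [← hF]; exact hc), add_zero]
        | smul r b hb h1 => rw [smul_assoc, h1 (by rw [← hF]; exact hb), smul_zero]
      have h6 := T.smul_mem (Localization.mk 1 (s * w)) (hmemT _ hw)
      rw [LocalizedModule.mk_smul_mk, one_smul, mul_one, mul_comm, LocalizedModule.mk_cancel_common_left w s m] at h6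
      exact h6
  · obtain ⟨a, ha, s, rfl⟩ := hI' x hx
    induction l using LocalizedModule.induction_on with
    | h m u =>
      obtain ⟨n, hn⟩ := htor a ha m
      refine ⟨n, ?_⟩
      rw [Localization.mk_pow, LocalizedModule.mk_smul_mk, hn, LocalizedModule.zero_mk]

theorem aux_stable {A : Type u} [CommRing A] [IsNoetherianRing A] (I : Ideal A)
    {M : Type u} [AddCommGroup M] [Module A M]
    (htor : ∀ x ∈ I, ∀ l : M, ∃ n : ℕ, x ^ n • l = 0)
    (hfin : (Submodule.torsionBySet A M (I : Set A)).FG) (x : A) :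
    ∃ k : ℕ, ∀ m : M, ∃ s ∈ auxS I, ∃ m' : M, s • x ^ k • m = x ^ (k + 1) • m' := by
  have hart := aux_localized_artinian I htor hfin
  set S := auxS I
  let φ := LinearMap.lsmul (Localization S) (LocalizedModule S M) (Localization.mk x 1)
  obtain ⟨k, hk⟩ := IsArtinian.monotone_stabilizes (R := Localization S)
    (M := LocalizedModule S M) φ.iterateRange
  refine ⟨k, fun m => ?_⟩
  have h1 : LinearMap.range (φ ^ k) = LinearMap.range (φ ^ (k + 1)) := hk (k + 1) (Nat.le_succ k)
  have hφ : ∀ j (z : LocalizedModule S M), (φ ^ j) z = (Localization.mk (x ^ j) 1 : Localization S) • z := by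
    intro j
    induction j with
    | zero => intro z; simp [Localization.mk_one]
    | succ j ih =>
      intro z
      rw [pow_succ', Module.End.mul_apply, ih]
      change (Localization.mk x 1 : Localization S) •
        ((Localization.mk (x ^ j) 1 : Localization S) • z) = _
      rw [smul_smul, Localization.mk_mul, one_mul, ← pow_succ']
  have h2 : (φ ^ k) (LocalizedModule.mk m 1) ∈ LinearMap.range (φ ^ (k + 1)) := h1 ▸ ⟨_, rfl⟩
  obtain ⟨z, hz⟩ := h2
  rw [hφ, hφ] at hz
  induction z using LocalizedModule.induction_on with
  | h n s =>
    rw [LocalizedModule.mk_smul_mk, LocalizedModule.mk_smul_mk, LocalizedModule.mk_eq] at hz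
    obtain ⟨u, hu⟩ := hz
    simp only [one_mul, mul_one, one_smul] at hu
    refine ⟨u * s, S.mul_mem u.2 s.2, u • n, ?_⟩
    rw [mul_smul, smul_comm _ u n]
    exact hu.symm

end PureAlgebra
section ExtPart

open Abelian

theorem aux_extMk_zero {A : Type u} [CommRing A] {X Y : ModuleCat.{u} A}
    (P : ProjectiveResolution X) (f : P.complex.X 0 ⟶ Y) (m : ℕ) (hm : 0 + 1 = m)
    (hf : P.complex.d m 0 ≫ f = 0) (h0 : P.extMk f m hm hf = 0) : f = 0 := by
  simp only [← P.extEquivCohomologyClass.apply_eq_iff_eq,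
    ProjectiveResolution.extEquivCohomologyClass_extMk,
    ProjectiveResolution.extEquivCohomologyClass_zero,
    CochainComplex.HomComplex.CohomologyClass.mk_eq_zero_iff] at h0
  rw [CochainComplex.HomComplex.Cocycle.toSingleMk_mem_coboundaries_iff _ _ _ _ _ 1 (by simp)] at h0
  obtain ⟨g, hg⟩ := h0
  have hz : Limits.IsZero (P.cochainComplex.X 1) :=
    P.cochainComplex.isZero_of_isStrictlyLE 0 1 (by lia)
  rw [hz.eq_of_src g 0, Limits.comp_zero] at hg
  rw [← cancel_epi (P.cochainComplexXIso (-(0 : ℕ)) 0 rfl).hom, Limits.comp_zero]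
  exact hg.symm

theorem aux_finite_transfer {A : Type u} [CommRing A] {Z B C : Type*} [AddCommGroup Z]
    [AddCommGroup B] [AddCommGroup C] [Module A Z] [Module A B] [Module A C]
    (f : Z →ₗ[A] B) (g : Z →ₗ[A] C) (hf : Function.Surjective f) (hg : Function.Surjective g)
    (h : LinearMap.ker f = LinearMap.ker g) : Module.Finite A B ↔ Module.Finite A C := by
  let e : B ≃ₗ[A] C := (f.quotKerEquivOfSurjective hf).symm ≪≫ₗ
    (Submodule.quotEquivOfEq _ _ h) ≪≫ₗ (g.quotKerEquivOfSurjective hg)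
  exact ⟨fun _ => Module.Finite.equiv e, fun _ => Module.Finite.equiv e.symm⟩

theorem aux_smul_extMk {A : Type u} [CommRing A] {X Y : ModuleCat.{u} A}
    (P : ProjectiveResolution X) {n : ℕ} (f : P.complex.X n ⟶ Y) (m : ℕ) (hm : n + 1 = m)
    (hf : P.complex.d m n ≫ f = 0) (a : A) (haf : P.complex.d m n ≫ (a • f) = 0) :
    P.extMk (a • f) m hm haf = a • P.extMk f m hm hf := by
  rw [Ext.smul_eq_comp_mk₀, P.extMk_comp_mk₀]
  simp

theorem aux_ext_compare {A : Type u} [CommRing A] (X Y : ModuleCat.{u} A) (n : ℕ) :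
    Module.Finite A (extModule A n X Y) ↔ Module.Finite A (Abelian.Ext X Y n) := by
  let P : ProjectiveResolution X := projectiveResolution X
  let K := P.complex.linearYonedaObj A Y
  let e1 : extModule A n X Y ≅ (K.sc n).homology := P.isoExt n Y
  let e2 := e1 ≪≫ (K.sc n).moduleCatHomologyIso
  let e : extModule A n X Y ≃ₗ[A]
    (LinearMap.ker (K.sc n).g.hom ⧸ LinearMap.range (K.sc n).moduleCatToCycles) :=
    e2.toLinearEquiv
  rw [show Module.Finite A (extModule A n X Y) ↔ Module.Finite A
    (LinearMap.ker (K.sc n).g.hom ⧸ LinearMap.range (K.sc n).moduleCatToCycles) from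
    ⟨fun _ => Module.Finite.equiv e, fun _ => Module.Finite.equiv e.symm⟩]
  have hnext : n + 1 = (ComplexShape.up ℕ).next n := by simp
  have hcyc : ∀ z : LinearMap.ker (K.sc n).g.hom,
      P.complex.d ((ComplexShape.up ℕ).next n) n ≫ (z.1 : P.complex.X n ⟶ Y) = 0 := fun z => z.2
  let q : LinearMap.ker (K.sc n).g.hom →ₗ[A] Abelian.Ext X Y n :=
    { toFun := fun z => P.extMk (z.1 : P.complex.X n ⟶ Y) _ hnext (hcyc z)
      map_add' := fun z w => (P.add_extMk _ _ _ _ _ _).symm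
      map_smul' := fun a z =>
        aux_smul_extMk P (z.1 : P.complex.X n ⟶ Y) _ hnext (hcyc z) a (hcyc (a • z)) }
  refine aux_finite_transfer (LinearMap.range (K.sc n).moduleCatToCycles).mkQ q
    (Submodule.mkQ_surjective _) ?_ ?_
  · intro α
    obtain ⟨f, hf, h⟩ := P.extMk_surjective α _ hnext
    exact ⟨⟨f, hf⟩, h⟩
  · rw [Submodule.ker_mkQ]
    ext z
    rw [LinearMap.mem_ker, LinearMap.mem_range]
    change _ ↔ P.extMk (z.1 : P.complex.X n ⟶ Y) _ hnext (hcyc z) = 0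
    rcases n with _ | n
    · constructor
      · rintro ⟨y, hy⟩
        have hz : z = 0 := by
          rw [← hy]
          apply Subtype.ext
          change (K.d ((ComplexShape.up ℕ).prev 0) 0).hom y = 0
          rw [K.shape _ _ (by simp)]
          rfl
        subst hz
        exact q.map_zero
      · intro h
        have := aux_extMk_zero P _ _ _ _ h
        refine ⟨0, ?_⟩
        rw [map_zero]
        exact Subtype.ext this.symm
    · have hp : (ComplexShape.up ℕ).prev (n + 1) + 1 = n + 1 := by simp
      refine Iff.trans ?_ (P.extMk_eq_zero_iff (z.1 : P.complex.X (n + 1) ⟶ Y) _ hnext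
        (hcyc z) _ hp).symm
      constructor
      · rintro ⟨y, hy⟩
        exact ⟨y, congrArg Subtype.val hy⟩
      · rintro ⟨g, hg⟩
        exact ⟨g, Subtype.ext hg⟩

end ExtPart
section Cofinite

open Abelian

/-- Finiteness of `Ext^n(A/I, M)`. -/
def auxE {A : Type u} [CommRing A] (I : Ideal A) (n : ℕ) (M : Type u) [AddCommGroup M]
    [Module A M] : Prop :=
  Module.Finite A (Abelian.Ext (ModuleCat.of A (A ⧸ I)) (ModuleCat.of A M) n)

theorem aux_exact_finite {A : Type u} [CommRing A] [IsNoetherianRing A] {X Y Z : Type*}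
    [AddCommGroup X] [AddCommGroup Y] [AddCommGroup Z] [Module A X] [Module A Y] [Module A Z]
    (f : X →ₗ[A] Y) (g : Y →ₗ[A] Z) [Module.Finite A X] [Module.Finite A Z]
    (h : ∀ y, g y = 0 → ∃ x, f x = y) : Module.Finite A Y := by
  have h1 : IsNoetherian A (LinearMap.ker g) := by
    have : LinearMap.ker g ≤ LinearMap.range f := fun y hy => h y hy
    exact isNoetherian_of_le this
  have h2 : IsNoetherian A (LinearMap.range g) := inferInstance
  have : IsNoetherian A Y := by
    have h3 : (LinearMap.ker g).subtype.range = LinearMap.ker g.rangeRestrict := by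
      rw [LinearMap.ker_rangeRestrict, Submodule.range_subtype]
    exact isNoetherian_of_range_eq_ker _ _ h3
  infer_instance

variable {A : Type u} [CommRing A] [IsNoetherianRing A] (I : Ideal A)
  {M N : Type u} [AddCommGroup M] [Module A M] [AddCommGroup N] [Module A N]

theorem auxE_mid (g : M →ₗ[A] N) (hg : Function.Surjective g) (n : ℕ)
    (h1 : auxE I n (LinearMap.ker g)) (h3 : auxE I n N) : auxE I n M := by
  have hS := LinearMap.shortExact_shortComplexKer hg
  unfold auxE at *
  exact aux_exact_finite
    ((Ext.mk₀ g.shortComplexKer.f).postcompOfLinear A (ModuleCat.of A (A ⧸ I)) (add_zero n))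
    ((Ext.mk₀ g.shortComplexKer.g).postcompOfLinear A (ModuleCat.of A (A ⧸ I)) (add_zero n))
    (fun y hy => Ext.covariant_sequence_exact₂ _ hS y hy)

theorem auxE_quot (g : M →ₗ[A] N) (hg : Function.Surjective g) (n : ℕ)
    (h2 : auxE I n M) (h1 : auxE I (n + 1) (LinearMap.ker g)) : auxE I n N := by
  have hS := LinearMap.shortExact_shortComplexKer hg
  unfold auxE at *
  exact aux_exact_finite
    ((Ext.mk₀ g.shortComplexKer.g).postcompOfLinear A (ModuleCat.of A (A ⧸ I)) (add_zero n))
    (hS.extClass.postcompOfLinear A (ModuleCat.of A (A ⧸ I)) (rfl : n + 1 = n + 1))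
    (fun y hy => Ext.covariant_sequence_exact₃ _ hS y rfl hy)

theorem auxE_sub (g : M →ₗ[A] N) (hg : Function.Surjective g) (n : ℕ)
    (h3 : auxE I n N) (h2 : auxE I (n + 1) M) : auxE I (n + 1) (LinearMap.ker g) := by
  have hS := LinearMap.shortExact_shortComplexKer hg
  unfold auxE at *
  exact aux_exact_finite
    (hS.extClass.postcompOfLinear A (ModuleCat.of A (A ⧸ I)) (rfl : n + 1 = n + 1))
    ((Ext.mk₀ g.shortComplexKer.f).postcompOfLinear A (ModuleCat.of A (A ⧸ I)) (add_zero (n + 1)))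
    (fun y hy => Ext.covariant_sequence_exact₁ _ hS y hy rfl)

/-- `Ext^0` is the socle. -/
theorem auxE_zero_iff : auxE I 0 M ↔ (Submodule.torsionBySet A M (I : Set A)).FG := by
  rw [← Module.Finite.iff_fg]
  let e1 : Ext (ModuleCat.of A (A ⧸ I)) (ModuleCat.of A M) 0 ≃ₗ[A] ((A ⧸ I) →ₗ[A] M) :=
    Ext.linearEquiv₀.trans ModuleCat.homLinearEquiv
  let e2 : ((A ⧸ I) →ₗ[A] M) ≃ₗ[A] Submodule.torsionBySet A M (I : Set A) :=
    LinearEquiv.ofBijective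
      (LinearMap.codRestrict _ (LinearMap.applyₗ (1 : A ⧸ I)) (fun f => by
        rw [Submodule.mem_torsionBySet_iff]
        rintro ⟨a, ha⟩
        change a • f 1 = 0
        rw [← map_smul]
        have : a • (1 : A ⧸ I) = 0 := by
          rw [Algebra.smul_def, mul_one]
          exact Ideal.Quotient.eq_zero_iff_mem.mpr ha
        rw [this, map_zero])) (by
      constructor
      · intro f g h
        have h1 : f 1 = g 1 := congrArg Subtype.val h
        apply LinearMap.ext
        intro z
        obtain ⟨a, rfl⟩ := Ideal.Quotient.mk_surjective z
        have : Ideal.Quotient.mk I a = a • (1 : A ⧸ I) := by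
          rw [Algebra.smul_def, mul_one]; rfl
        rw [this, map_smul, map_smul, h1]
      · rintro ⟨m, hm⟩
        refine ⟨Submodule.liftQ I (LinearMap.toSpanSingleton A M m) (fun a ha => ?_), ?_⟩
        · exact (Submodule.mem_torsionBySet_iff _ _).mp hm ⟨a, ha⟩
        · apply Subtype.ext
          change LinearMap.toSpanSingleton A M m 1 = m
          simp)
  exact ⟨fun h => by unfold auxE at h; exact Module.Finite.equiv (e1.trans e2),
    fun h => by unfold auxE; exact Module.Finite.equiv (e1.trans e2).symm⟩

theorem auxE_zero_inj (g : M →ₗ[A] N) (hg : Function.Injective g) (h : auxE I 0 N) :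
    auxE I 0 M := by
  rw [auxE_zero_iff, ← Module.Finite.iff_fg] at *
  let f : Submodule.torsionBySet A M (I : Set A) →ₗ[A] Submodule.torsionBySet A N (I : Set A) :=
    g.restrict (fun m hm => by
      rw [Submodule.mem_torsionBySet_iff] at *
      intro a
      rw [← map_smul, hm a, map_zero])
  refine Module.Finite.of_injective f (fun a b hab => Subtype.ext (hg (congrArg Subtype.val hab)))

theorem auxE_of_finite [Module.Finite A M] (n : ℕ) : auxE I n M := by
  unfold auxE
  infer_instance

theorem auxE_equiv (e : M ≃ₗ[A] N) (n : ℕ) (h : auxE I n M) : auxE I n N := by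
  have : Module.Finite A (LinearMap.ker (e : M →ₗ[A] N)) := by
    rw [LinearEquiv.ker]; infer_instance
  exact auxE_quot I (e : M →ₗ[A] N) e.surjective n h (auxE_of_finite I _)

/-- multiplication by `x` as an endomorphism -/
abbrev auxmul (x : A) (M : Type u) [AddCommGroup M] [Module A M] : M →ₗ[A] M :=
  LinearMap.lsmul A M x

theorem aux_stepA (x : A) (h0 : auxE I 0 M) (h1 : auxE I 1 M) :
    auxE I 0 (LinearMap.ker (auxmul x M)) ∧ auxE I 1 (LinearMap.ker (auxmul x M)) := by
  refine ⟨auxE_zero_inj I (Submodule.subtype _) (Submodule.subtype_injective _) h0, ?_⟩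
  have h2 : auxE I 0 (LinearMap.range (auxmul x M)) :=
    auxE_zero_inj I (Submodule.subtype _) (Submodule.subtype_injective _) h0
  have := auxE_sub I (auxmul x M).rangeRestrict (LinearMap.surjective_rangeRestrict _) 0 h2 h1
  rwa [LinearMap.ker_rangeRestrict] at this

theorem aux_stepB (x : A) (h0 : auxE I 0 M) (h1 : auxE I 1 M)
    (hK : ∀ n, auxE I n (LinearMap.ker (auxmul x M))) :
    auxE I 0 (LinearMap.range (auxmul x M)) ∧ auxE I 1 (LinearMap.range (auxmul x M)) := by
  refine ⟨auxE_zero_inj I (Submodule.subtype _) (Submodule.subtype_injective _) h0, ?_⟩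
  refine auxE_quot I (auxmul x M).rangeRestrict (LinearMap.surjective_rangeRestrict _) 1 h1 ?_
  rw [LinearMap.ker_rangeRestrict]; exact hK 2

theorem aux_stepC (x : A) 
    (hK : ∀ n, auxE I n (LinearMap.ker (auxmul x M)))
    (hR : ∀ n, auxE I n (LinearMap.range (auxmul x M))) (n : ℕ) : auxE I n M := by
  refine auxE_mid I (auxmul x M).rangeRestrict (LinearMap.surjective_rangeRestrict _) n ?_ (hR n)
  rw [LinearMap.ker_rangeRestrict]; exact hK n

theorem aux_stepE (x : A) (h0 : auxE I 0 M) (h1 : auxE I 1 (LinearMap.range (auxmul x M))) :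
    auxE I 0 (M ⧸ LinearMap.range (auxmul x M)) := by
  refine auxE_quot I (LinearMap.range (auxmul x M)).mkQ (Submodule.mkQ_surjective _) 0 h0 ?_
  rw [Submodule.ker_mkQ]; exact h1

/-- Multiplication by `x ∈ I` kills `Ext(A/I, M)`. -/
theorem aux_ext_smul (x : A) (hx : x ∈ I) (n : ℕ)
    (y : Ext (ModuleCat.of A (A ⧸ I)) (ModuleCat.of A M) n) : x • y = 0 := by
  have h0 : x • 𝟙 (ModuleCat.of A (A ⧸ I)) = 0 := by
    ext
    change x • (1 : A ⧸ I) = 0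
    rw [Algebra.smul_def, mul_one]
    exact Ideal.Quotient.eq_zero_iff_mem.mpr hx
  have : x • y = (Ext.mk₀ (x • 𝟙 (ModuleCat.of A (A ⧸ I)))).comp y (zero_add n) := by
    simp [Ext.mk₀_smul]
  rw [this, h0]; simp

theorem aux_stepD (x : A) (hx : x ∈ I)
    (hK : ∀ n, auxE I n (LinearMap.ker (auxmul x M)))
    (hQ : ∀ n, auxE I n (M ⧸ LinearMap.range (auxmul x M))) (n : ℕ) : auxE I n M := by
  let X := ModuleCat.of A (A ⧸ I)
  let f := (auxmul x M).rangeRestrict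
  have hS1 := LinearMap.shortExact_shortComplexKer (LinearMap.surjective_rangeRestrict (auxmul x M))
  let ι := (LinearMap.range (auxmul x M)).subtype
  let F : Ext X (ModuleCat.of A M) n →ₗ[A] Ext X (ModuleCat.of A (LinearMap.range (auxmul x M))) n :=
    (Ext.mk₀ (ModuleCat.ofHom f)).postcompOfLinear A X (add_zero n)
  let G : Ext X (ModuleCat.of A (LinearMap.range (auxmul x M))) n →ₗ[A] Ext X (ModuleCat.of A M) n :=
    (Ext.mk₀ (ModuleCat.ofHom ι)).postcompOfLinear A X (add_zero n)
  have hGF : ∀ y, G (F y) = 0 := by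
    intro y
    have : G (F y) = x • y := by
      change (y.comp (Ext.mk₀ (ModuleCat.ofHom f)) (add_zero n)).comp
        (Ext.mk₀ (ModuleCat.ofHom ι)) (add_zero n) = _
      rw [Ext.comp_assoc_of_third_deg_zero, Ext.mk₀_comp_mk₀, Ext.smul_eq_comp_mk₀]
      congr 2
    rw [this, aux_ext_smul I x hx]
  -- the kernel of `G` is finite
  have hG : Module.Finite A (LinearMap.ker G) := by
    rcases n with _ | n
    · have : Function.Injective G := by
        have hm : Mono (ModuleCat.ofHom ι) :=
          (ModuleCat.mono_iff_injective _).mpr (Submodule.subtype_injective _)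
        exact Ext.postcomp_mk₀_injective_of_mono X (ModuleCat.ofHom ι)
      rw [LinearMap.ker_eq_bot.mpr this]
      infer_instance
    · let T : ShortComplex (ModuleCat.{u} A) :=
        ⟨ModuleCat.ofHom ι, ModuleCat.ofHom (LinearMap.range (auxmul x M)).mkQ, by
          ext z
          change (LinearMap.range (auxmul x M)).mkQ z.1 = 0
          simp⟩
      have hT : T.ShortExact :=
        { exact := (ShortComplex.ShortExact.moduleCat_exact_iff_function_exact _).mpr (by
            rw [LinearMap.exact_iff]
            change LinearMap.ker (LinearMap.range (auxmul x M)).mkQ =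
              LinearMap.range (LinearMap.range (auxmul x M)).subtype
            rw [Submodule.ker_mkQ, Submodule.range_subtype])
          mono_f := (ModuleCat.mono_iff_injective _).mpr (Submodule.subtype_injective _)
          epi_g := (ModuleCat.epi_iff_surjective _).mpr (Submodule.mkQ_surjective _) }
      let δ : Ext X T.X₃ n →ₗ[A] Ext X T.X₁ (n + 1) :=
        hT.extClass.postcompOfLinear A X (rfl : n + 1 = n + 1)
      have hfin : Module.Finite A (Ext X T.X₃ n) := hQ n
      have hle : LinearMap.ker G ≤ LinearMap.range δ := fun y hy =>
        Ext.covariant_sequence_exact₁ X hT y hy rfl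
      have : IsNoetherian A (LinearMap.ker G) := isNoetherian_of_le hle
      infer_instance
  have hK' : Module.Finite A (Ext X (ModuleCat.of A (LinearMap.ker f)) n) := by
    have := hK n
    rw [← LinearMap.ker_rangeRestrict] at this
    exact this
  let F' : Ext X (ModuleCat.of A M) n →ₗ[A] LinearMap.ker G := F.codRestrict _ hGF
  exact aux_exact_finite
    ((Ext.mk₀ f.shortComplexKer.f).postcompOfLinear A X (add_zero n)) F'
    (fun y hy => Ext.covariant_sequence_exact₂ _ hS1 y (congrArg Subtype.val hy))

theorem aux_zero_dim (J : Ideal A) (hJI : J ≤ I) :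
    ∀ (M : Type u) [AddCommGroup M] [Module A M] [IsArtinian A M],
    (∀ a ∈ J, ∀ m : M, a • m = 0) → auxE I 0 M → ∀ n, auxE I n M := by
  induction J using WellFoundedGT.induction with
  | ind J ih =>
    intro M _ _ _ hJ h0
    by_cases hIJ : I ≤ J
    · have hfg := (auxE_zero_iff I).mp h0
      have : Submodule.torsionBySet A M (I : Set A) = ⊤ := by
        rw [eq_top_iff]
        intro m _
        rw [Submodule.mem_torsionBySet_iff]
        exact fun a => hJ a (hIJ a.2) m
      rw [this] at hfg
      have : Module.Finite A M := ⟨hfg⟩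
      exact auxE_of_finite I
    · obtain ⟨x, hxI, hxJ⟩ := SetLike.not_le_iff_exists.mp hIJ
      have hlt : J < J ⊔ Ideal.span {x} := by
        rw [left_lt_sup, Ideal.span_singleton_le_iff_mem]; exact hxJ
      have ih' := ih _ hlt (sup_le hJI (by rwa [Ideal.span_singleton_le_iff_mem]))
      have hker : ∀ (L : Type u) [AddCommGroup L] [Module A L] [IsArtinian A L],
          (∀ a ∈ J, ∀ m : L, a • m = 0) → auxE I 0 L →
          ∀ n, auxE I n (LinearMap.ker (auxmul x L)) := by
        intro L _ _ _ hL hL0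
        refine ih' _ ?_ (auxE_zero_inj I (Submodule.subtype _) (Submodule.subtype_injective _) hL0)
        rintro a ha ⟨l, hl⟩
        obtain ⟨b, hb, c, hc, rfl⟩ := Submodule.mem_sup.mp ha
        obtain ⟨d, rfl⟩ := Ideal.mem_span_singleton'.mp hc
        apply Subtype.ext
        change (b + d * x) • l = 0
        have h2 : x • l = 0 := hl
        rw [add_smul, hL b hb, mul_smul, h2, smul_zero, add_zero]
      have claim : ∀ (k : ℕ) (L : Type u) [AddCommGroup L] [Module A L] [IsArtinian A L],
          (∀ a ∈ J, ∀ m : L, a • m = 0) → auxE I 0 L →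
          (∀ l : L, ∃ l' : L, x ^ k • l = x ^ (k + 1) • l') → ∀ n, auxE I n L := by
        intro k
        induction k with
        | zero =>
          intro L _ _ _ hL hL0 hst
          refine aux_stepD I x hxI (hker L hL hL0) (fun n => ?_)
          have : LinearMap.range (auxmul x L) = ⊤ := by
            rw [eq_top_iff]
            intro l _
            obtain ⟨l', h⟩ := hst l
            refine ⟨l', ?_⟩
            change x • l' = l
            simpa using h.symm
          rw [this]
          exact auxE_of_finite I n
        | succ k ihk =>
          intro L _ _ _ hL hL0 hst
          refine aux_stepC I x (hker L hL hL0) ?_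
          refine ihk _ ?_ (auxE_zero_inj I (Submodule.subtype _)
            (Submodule.subtype_injective _) hL0) ?_
          · intro a ha m
            exact Subtype.ext (hL a ha m)
          · rintro ⟨_, l, rfl⟩
            obtain ⟨l', h⟩ := hst l
            refine ⟨⟨_, l', rfl⟩, Subtype.ext ?_⟩
            change x ^ k • x • l = x ^ (k + 1) • x • l'
            rw [smul_smul, smul_smul, ← pow_succ, ← pow_succ, h]
      obtain ⟨k, hk⟩ := IsArtinian.monotone_stabilizes (R := A) (M := M) (auxmul x M).iterateRange
      have h1 : LinearMap.range (auxmul x M ^ k) = LinearMap.range (auxmul x M ^ (k + 1)) :=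
        hk (k + 1) (Nat.le_succ k)
      have hφ : ∀ j (z : M), (auxmul x M ^ j) z = x ^ j • z := by
        intro j
        induction j with
        | zero => intro z; simp
        | succ j ih =>
          intro z
          rw [pow_succ', Module.End.mul_apply, ih]
          change x • (x ^ j • z) = _
          rw [smul_smul, ← pow_succ']
      refine claim k M hJ h0 (fun l => ?_)
      have h2 : (auxmul x M ^ k) l ∈ LinearMap.range (auxmul x M ^ (k + 1)) := h1 ▸ ⟨_, rfl⟩
      obtain ⟨z, hz⟩ := h2
      rw [hφ, hφ] at hz
      exact ⟨z, hz.symm⟩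

theorem aux_main (hdim : ringKrullDim (A ⧸ I) ≤ 1) (J : Ideal A) (hJI : J ≤ I) :
    ∀ (M : Type u) [AddCommGroup M] [Module A M],
    (∀ a ∈ J, ∀ m : M, a • m = 0) → (∀ x ∈ I, ∀ l : M, ∃ n : ℕ, x ^ n • l = 0) →
    auxE I 0 M → auxE I 1 M → ∀ n, auxE I n M := by
  induction J using WellFoundedGT.induction with
  | ind J ih =>
    intro M _ _ hJ htor h0 h1
    by_cases hIJ : I ≤ J
    · have hfg := (auxE_zero_iff I).mp h0
      have : Submodule.torsionBySet A M (I : Set A) = ⊤ := by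
        rw [eq_top_iff]
        intro m _
        rw [Submodule.mem_torsionBySet_iff]
        exact fun a => hJ a (hIJ a.2) m
      rw [this] at hfg
      have : Module.Finite A M := ⟨hfg⟩
      exact auxE_of_finite I
    · obtain ⟨x, hxI, hxJ⟩ := SetLike.not_le_iff_exists.mp hIJ
      have hlt : J < J ⊔ Ideal.span {x} := by
        rw [left_lt_sup, Ideal.span_singleton_le_iff_mem]; exact hxJ
      have ih' := ih _ hlt (sup_le hJI (by rwa [Ideal.span_singleton_le_iff_mem]))
      have hker : ∀ (L : Type u) [AddCommGroup L] [Module A L],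
          (∀ a ∈ J, ∀ m : L, a • m = 0) → (∀ x ∈ I, ∀ l : L, ∃ n : ℕ, x ^ n • l = 0) →
          auxE I 0 L → auxE I 1 L →
          ∀ n, auxE I n (LinearMap.ker (auxmul x L)) := by
        intro L _ _ hL htL hL0 hL1
        obtain ⟨hK0, hK1⟩ := aux_stepA I x hL0 hL1
        refine ih' _ ?_ ?_ hK0 hK1
        · rintro a ha ⟨l, hl⟩
          obtain ⟨b, hb, c, hc, rfl⟩ := Submodule.mem_sup.mp ha
          obtain ⟨d, rfl⟩ := Ideal.mem_span_singleton'.mp hc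
          apply Subtype.ext
          change (b + d * x) • l = 0
          have h2 : x • l = 0 := hl
          rw [add_smul, hL b hb, mul_smul, h2, smul_zero, add_zero]
        · intro y hy l
          obtain ⟨n, hn⟩ := htL y hy l
          exact ⟨n, Subtype.ext hn⟩
      have claim : ∀ (k : ℕ) (L : Type u) [AddCommGroup L] [Module A L],
          (∀ a ∈ J, ∀ m : L, a • m = 0) → (∀ x ∈ I, ∀ l : L, ∃ n : ℕ, x ^ n • l = 0) →
          auxE I 0 L → auxE I 1 L →
          (∀ l : L, ∃ s ∈ auxS I, ∃ l' : L, s • x ^ k • l = x ^ (k + 1) • l') →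
          ∀ n, auxE I n L := by
        intro k
        induction k with
        | zero =>
          intro L _ _ hL htL hL0 hL1 hst
          have hK := hker L hL htL hL0 hL1
          refine aux_stepD I x hxI hK ?_
          set Q := L ⧸ LinearMap.range (auxmul x L) with hQdef
          have hQ0 : auxE I 0 Q := aux_stepE I x hL0 (aux_stepB I x hL0 hL1 hK).2
          have htQ : ∀ x ∈ I, ∀ l : Q, ∃ n : ℕ, x ^ n • l = 0 := by
            intro y hy l
            obtain ⟨l, rfl⟩ := Submodule.mkQ_surjective _ l
            obtain ⟨n, hn⟩ := htL y hy l
            exact ⟨n, by rw [← map_smul, hn, map_zero]⟩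
          have hSQ : ∀ q : Q, ∃ s ∈ auxS I, s • q = 0 := by
            intro l
            obtain ⟨l, rfl⟩ := Submodule.mkQ_surjective _ l
            obtain ⟨s, hs, l', h⟩ := hst l
            refine ⟨s, hs, ?_⟩
            rw [← map_smul, Submodule.mkQ_apply, Submodule.Quotient.mk_eq_zero]
            refine ⟨l', ?_⟩
            change x • l' = s • l
            simpa using h.symm
          have hsoc : IsArtinian A (Submodule.torsionBySet A Q (I : Set A)) := by
            have hfg := (auxE_zero_iff I).mp hQ0
            have hfin : Module.Finite A (Submodule.torsionBySet A Q (I : Set A)) :=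
              Module.Finite.iff_fg.mpr hfg
            obtain ⟨G, hG⟩ := hfg
            choose t htS ht using hSQ
            let w : A := ∏ g ∈ G, t g
            have hwS : w ∈ auxS I := Submonoid.prod_mem _ (fun g _ => htS g)
            classical
            have hw : ∀ q ∈ Submodule.torsionBySet A Q (I : Set A), w • q = 0 := by
              intro q hq
              rw [← hG] at hq
              induction hq using Submodule.span_induction with
              | mem b hb =>
                have h5 : w = (∏ c ∈ G.erase b, t c) * t b := (Finset.prod_erase_mul G t hb).symm
                rw [h5, mul_smul, ht b, smul_zero]
              | zero => simp
              | add b c _ _ h1 h2 => rw [smul_add, h1, h2, add_zero]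
              | smul r b _ h1 => rw [smul_comm, h1, smul_zero]
            refine aux_artinian_of_fg (I ⊔ Ideal.span {w}) (fun q hq hle => ?_) ?_
            · rcases aux_prime I hdim q hq (le_sup_left.trans hle) with h | h
              · exfalso
                refine hwS q h (hle (Ideal.mem_sup_right (Ideal.mem_span_singleton_self w)))
              · exact h
            · rintro a ha ⟨l, hl⟩
              obtain ⟨b, hb, c, hc, rfl⟩ := Submodule.mem_sup.mp ha
              obtain ⟨d, rfl⟩ := Ideal.mem_span_singleton'.mp hc
              apply Subtype.ext
              change (b + d * w) • l = 0
              have h2 : b • l = 0 := (Submodule.mem_torsionBySet_iff _ _).mp hl ⟨b, hb⟩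
              rw [add_smul, h2, mul_smul, hw l hl, smul_zero, add_zero]
          have hQart : IsArtinian A Q :=
            aux_artinian_of_socle I (Submodule.torsionBySet A Q (I : Set A)) (fun l hl => by
              rw [Submodule.mem_torsionBySet_iff]
              exact fun a => hl a a.2) htQ
          refine aux_zero_dim I ⊥ bot_le Q ?_ hQ0
          intro a ha m
          have : a = 0 := ha
          rw [this, zero_smul]
        | succ k ihk =>
          intro L _ _ hL htL hL0 hL1 hst
          have hK := hker L hL htL hL0 hL1
          obtain ⟨hR0, hR1⟩ := aux_stepB I x hL0 hL1 hK
          refine aux_stepC I x hK ?_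
          refine ihk _ ?_ ?_ hR0 hR1 ?_
          · intro a ha m
            exact Subtype.ext (hL a ha m)
          · intro y hy l
            obtain ⟨n, hn⟩ := htL y hy l
            exact ⟨n, Subtype.ext hn⟩
          · rintro ⟨_, l, rfl⟩
            obtain ⟨s, hs, l', h⟩ := hst l
            refine ⟨s, hs, ⟨_, l', rfl⟩, Subtype.ext ?_⟩
            change s • x ^ k • x • l = x ^ (k + 1) • x • l'
            rw [smul_smul (x ^ k), smul_smul (x ^ (k + 1)), ← pow_succ, ← pow_succ, h]
      obtain ⟨k, hk⟩ := aux_stable I htor ((auxE_zero_iff I).mp h0) x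
      exact claim k M hJ htor h0 h1 hk

end Cofinite

theorem stmt6 [IsNoetherianRing R] (𝔞 : Ideal R) (M : ModuleCat.{u} R)
    (hdim : ringKrullDim (R ⧸ 𝔞) = 1)
    (hsupp : Module.support R M ⊆ PrimeSpectrum.zeroLocus (𝔞 : Set R))
    (h : ∀ i : ℕ, (i : ℕ∞) ≤ cohomologicalDim R 𝔞 M + 1 →
      Module.Finite R (extModule R i (ModuleCat.of R (R ⧸ 𝔞)) M)) :
    IsCofinite R 𝔞 M := by
  have hfin : ∀ i, Module.Finite R (extModule R i (ModuleCat.of R (R ⧸ 𝔞)) M) ↔ auxE 𝔞 i M :=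
    fun i => aux_ext_compare _ _ i
  refine ⟨hsupp, fun i => (hfin i).mpr ?_⟩
  refine aux_main 𝔞 hdim.le ⊥ bot_le M ?_ ?_ ((hfin 0).mp (h 0 (by simp)))
    ((hfin 1).mp (h 1 (by simp))) i
  · intro a ha m
    have : a = 0 := ha
    rw [this, zero_smul]
  · intro x hx l
    have hrad : x ∈ (Ideal.radical (LinearMap.ker (LinearMap.toSpanSingleton R M l))) := by
      rw [Ideal.radical_eq_sInf, Ideal.mem_sInf]
      rintro p ⟨hp, hpp⟩
      have hmem : (⟨p, hpp⟩ : PrimeSpectrum R) ∈ Module.support R M := by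
        rw [Module.mem_support_iff_exists_annihilator]
        refine ⟨l, ?_⟩
        intro a ha
        apply hp
        rw [Submodule.mem_annihilator_span_singleton] at ha
        exact ha
      exact hsupp hmem hx
    obtain ⟨n, hn⟩ := hrad
    exact ⟨n, hn⟩
end

section
/- Let R be a Noetherian ring, 𝔞 an ideal with dim R/𝔞 = 1, and M an R-module. If Ext^i_R(R/𝔞, M) is finitely generated for all i ≤ cd(𝔞, M) + 1, then the local cohomology module H^i_𝔞(M) is 𝔞-cofinite for every i ≥ 0. -/
open CategoryTheory

universe u

variable (R : Type u) [CommRing R]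

section Layer1

open Abelian

variable {R : Type u} [CommRing R]

namespace CofAux

/-- cocycles -/
noncomputable def Zc {X : ModuleCat.{u} R} (P : ProjectiveResolution X) (Y : ModuleCat.{u} R) (n : ℕ) :
    Submodule R (P.complex.X n ⟶ Y) :=
  LinearMap.ker (Linear.leftComp R Y (P.complex.d (n+1) n))

lemma mem_Zc {X : ModuleCat.{u} R} (P : ProjectiveResolution X) (Y : ModuleCat.{u} R) (n : ℕ)
    (f : P.complex.X n ⟶ Y) : f ∈ Zc P Y n ↔ P.complex.d (n+1) n ≫ f = 0 := Iff.rfl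

/-- class in the derived Ext -/
noncomputable def newMk {X : ModuleCat.{u} R} (P : ProjectiveResolution X) (Y : ModuleCat.{u} R)
    (n : ℕ) : Zc P Y n →ₗ[R] Abelian.Ext X Y n where
  toFun f := P.extMk f.1 (n+1) rfl ((mem_Zc P Y n f.1).1 f.2)
  map_add' f g := (P.add_extMk _ _ _ _ _ _).symm
  map_smul' r f := by
    rw [RingHom.id_apply, Abelian.Ext.smul_eq_comp_mk₀, P.extMk_comp_mk₀]
    congr 1

lemma newMk_surj {X : ModuleCat.{u} R} (P : ProjectiveResolution X) (Y : ModuleCat.{u} R)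
    (n : ℕ) : Function.Surjective (newMk P Y n) := by
  intro α
  obtain ⟨f, hf, h⟩ := P.extMk_surjective α (n+1) rfl
  exact ⟨⟨f, hf⟩, h⟩

lemma newMk_eq_zero {X : ModuleCat.{u} R} (P : ProjectiveResolution X) (Y : ModuleCat.{u} R)
    (n : ℕ) (f : Zc P Y n) : newMk P Y n f = 0 ↔
      ∃ g : P.complex.X ((ComplexShape.up ℕ).prev n) ⟶ Y, P.complex.d n _ ≫ g = f.1 := by
  cases n with
  | zero =>
    have h1 : (∃ g : P.complex.X ((ComplexShape.up ℕ).prev 0) ⟶ Y, P.complex.d 0 _ ≫ g = f.1)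
      ↔ f.1 = 0 := by
      rw [P.complex.shape _ _ (by simp)]
      simp [eq_comm]
    rw [h1]
    constructor
    · intro h
      simp only [newMk, LinearMap.coe_mk, AddHom.coe_mk] at h
      rw [← P.extEquivCohomologyClass.apply_eq_iff_eq, P.extEquivCohomologyClass_extMk,
        P.extEquivCohomologyClass_zero, CochainComplex.HomComplex.CohomologyClass.mk_eq_zero_iff,
        CochainComplex.HomComplex.Cocycle.toSingleMk_mem_coboundaries_iff _ _ _ _ _ 1 (by simp)] at h
      obtain ⟨g, hg⟩ := h
      have hz : P.cochainComplex.d (-((0:ℕ):ℤ)) 1 = 0 := by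
        apply Limits.IsZero.eq_of_tgt
        exact P.cochainComplex.isZero_of_isStrictlyLE 0 1 (by simp)
      rw [hz, Limits.zero_comp] at hg
      rw [← cancel_epi (P.cochainComplexXIso (-((0:ℕ):ℤ)) 0 rfl).hom, ← hg]
      simp
    · intro h
      have : f = 0 := Subtype.ext h
      rw [this, map_zero]
  | succ n =>
    have : (ComplexShape.up ℕ).prev (n+1) = n := CochainComplex.prev_nat_succ n
    rw [this]
    exact P.extMk_eq_zero_iff f.1 _ rfl ((mem_Zc P Y _ f.1).1 f.2) n rfl

noncomputable def oldHom {X : ModuleCat.{u} R} (P : ProjectiveResolution X) (Y : ModuleCat.{u} R)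
    (n : ℕ) : ModuleCat.of R (Zc P Y n) ⟶ (P.complex.linearYonedaObj R Y).cycles n :=
  (P.complex.linearYonedaObj R Y).liftCycles (ModuleCat.ofHom (Zc P Y n).subtype) (n+1)
    (by simp) (by
      ext f
      exact f.2)

lemma oldHom_i {X : ModuleCat.{u} R} (P : ProjectiveResolution X) (Y : ModuleCat.{u} R)
    (n : ℕ) : oldHom P Y n ≫ (P.complex.linearYonedaObj R Y).iCycles n =
      (ModuleCat.ofHom (Zc P Y n).subtype) :=
  HomologicalComplex.liftCycles_i _ _ _ _ _

noncomputable def oldMk {X : ModuleCat.{u} R} (P : ProjectiveResolution X) (Y : ModuleCat.{u} R)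
    (n : ℕ) : Zc P Y n →ₗ[R] extModule R n X Y :=
  (oldHom P Y n ≫ (P.complex.linearYonedaObj R Y).homologyπ n ≫ (P.isoExt n Y).inv).hom

lemma oldMk_surj {X : ModuleCat.{u} R} (P : ProjectiveResolution X) (Y : ModuleCat.{u} R)
    (n : ℕ) : Function.Surjective (oldMk P Y n) := by
  have h1 : Epi (oldHom P Y n) := by
    rw [ModuleCat.epi_iff_surjective]
    intro w
    have hm : Function.Injective ((P.complex.linearYonedaObj R Y).iCycles n) :=
      (ModuleCat.mono_iff_injective _).1 inferInstance
    refine ⟨⟨(P.complex.linearYonedaObj R Y).iCycles n w, ?_⟩, ?_⟩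
    · have := (P.complex.linearYonedaObj R Y).iCycles_d n (n+1)
      have := congr($this w)
      exact this
    · apply hm
      have := oldHom_i P Y n
      exact congr($this (⟨(P.complex.linearYonedaObj R Y).iCycles n w, _⟩ : Zc P Y n))
  have : Epi (oldHom P Y n ≫ (P.complex.linearYonedaObj R Y).homologyπ n ≫ (P.isoExt n Y).inv) := by
    infer_instance
  exact (ModuleCat.epi_iff_surjective _).1 this

lemma oldMk_eq_zero {X : ModuleCat.{u} R} (P : ProjectiveResolution X) (Y : ModuleCat.{u} R)
    (n : ℕ) (f : Zc P Y n) : oldMk P Y n f = 0 ↔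
      ∃ g : P.complex.X ((ComplexShape.up ℕ).prev n) ⟶ Y, P.complex.d n _ ≫ g = f.1 := by
  have hm : Function.Injective ((P.complex.linearYonedaObj R Y).iCycles n) :=
      (ModuleCat.mono_iff_injective _).1 inferInstance
  have hi : Function.Injective (P.isoExt (R := R) n Y).inv :=
      (ModuleCat.mono_iff_injective _).1 inferInstance
  have e1 : oldMk P Y n f = 0 ↔ (P.complex.linearYonedaObj R Y).homologyπ n (oldHom P Y n f) = 0 := by
    rw [← map_eq_zero_iff (P.isoExt (R := R) n Y).inv.hom hi]
    rfl
  rw [e1]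
  let K := P.complex.linearYonedaObj R Y
  have hex : (ShortComplex.mk _ _ (K.toCycles_comp_homologyπ ((ComplexShape.up ℕ).prev n) n)).Exact :=
    ShortComplex.exact_of_g_is_cokernel _ (K.homologyIsCokernel _ n rfl)
  rw [ShortComplex.moduleCat_exact_iff] at hex
  constructor
  · intro h
    obtain ⟨g, hg⟩ := hex _ h
    refine ⟨g, ?_⟩
    have h2 := congr(K.iCycles n $hg)
    have h3 := congr($(K.toCycles_i ((ComplexShape.up ℕ).prev n) n) g)
    have h4 := congr($(oldHom_i P Y n) f)
    exact h3.symm.trans (h2.trans h4)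
  · rintro ⟨g, hg⟩
    have : oldHom P Y n f = K.toCycles ((ComplexShape.up ℕ).prev n) n g := by
      apply hm
      have h3 := congr($(K.toCycles_i ((ComplexShape.up ℕ).prev n) n) g)
      have h4 := congr($(oldHom_i P Y n) f)
      exact h4.trans (hg.symm.trans h3.symm)
    rw [this]
    exact congr($(K.toCycles_comp_homologyπ ((ComplexShape.up ℕ).prev n) n) g)

noncomputable def extEquiv (n : ℕ) (X Y : ModuleCat.{u} R) :
    extModule R n X Y ≃ₗ[R] Abelian.Ext X Y n :=
  let P := projectiveResolution X
  ((oldMk P Y n).quotKerEquivOfSurjective (oldMk_surj P Y n)).symm ≪≫ₗ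
    Submodule.quotEquivOfEq _ _ (by
      ext f
      rw [LinearMap.mem_ker, LinearMap.mem_ker, oldMk_eq_zero, newMk_eq_zero]) ≪≫ₗ
    ((newMk P Y n).quotKerEquivOfSurjective (newMk_surj P Y n))

lemma extEquiv_oldMk (n : ℕ) (X Y : ModuleCat.{u} R) (f : Zc (projectiveResolution X) Y n) :
    extEquiv n X Y (oldMk _ Y n f) = newMk _ Y n f := by
  have : ((oldMk (projectiveResolution X) Y n).quotKerEquivOfSurjective (oldMk_surj _ Y n)).symm
      (oldMk _ Y n f) = Submodule.Quotient.mk f := by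
    rw [LinearEquiv.symm_apply_eq]
    rfl
  simp only [extEquiv, LinearEquiv.trans_apply]
  rw [this]
  rfl

/-- The lift -/
noncomputable def resHom {X X' : ModuleCat.{u} R} (g : X' ⟶ X) (P' : ProjectiveResolution X')
    (P : ProjectiveResolution X) : ProjectiveResolution.Hom P' P g where
  hom := ProjectiveResolution.lift g P' P
  hom_f_zero_comp_π_f_zero := by
    have := ProjectiveResolution.lift_commutes g P' P
    exact congr(($this).f 0)

lemma Zc_comp {X X' : ModuleCat.{u} R} {g : X' ⟶ X} {P' : ProjectiveResolution X'}
    {P : ProjectiveResolution X} (φ : ProjectiveResolution.Hom P' P g) (Y : ModuleCat.{u} R) (n : ℕ)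
    (f : Zc P Y n) : φ.hom.f n ≫ f.1 ∈ Zc P' Y n := by
  have := f.2
  rw [mem_Zc] at this ⊢
  simp [← φ.hom.comm_assoc, this]

lemma newMk_nat {X X' : ModuleCat.{u} R} {g : X' ⟶ X} {P' : ProjectiveResolution X'}
    {P : ProjectiveResolution X} (φ : ProjectiveResolution.Hom P' P g) (Y : ModuleCat.{u} R) (n : ℕ)
    (f : Zc P Y n) : (Abelian.Ext.mk₀ g).comp (newMk P Y n f) (zero_add _) =
      newMk P' Y n ⟨_, Zc_comp φ Y n f⟩ :=
  ProjectiveResolution.mk₀_comp_extMk f.1 (n+1) rfl ((mem_Zc P Y n f.1).1 f.2) φ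

/-- induced map on Hom complexes -/
noncomputable def psi {X X' : ModuleCat.{u} R} {P' : ProjectiveResolution X'}
    {P : ProjectiveResolution X} (φ : P'.complex ⟶ P.complex) (Y : ModuleCat.{u} R) :
    P.complex.linearYonedaObj R Y ⟶ P'.complex.linearYonedaObj R Y :=
  (HomologicalComplex.unopFunctor (ModuleCat.{u} R) (ComplexShape.down ℕ)).map
    (((((linearYoneda R (ModuleCat.{u} R)).obj Y).rightOp.mapHomologicalComplex _).map φ).op)

lemma isoExt_nat {X X' : ModuleCat.{u} R} {g : X' ⟶ X} {P' : ProjectiveResolution X'}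
    {P : ProjectiveResolution X} (φ : ProjectiveResolution.Hom P' P g) (Y : ModuleCat.{u} R) (n : ℕ) :
    (P.isoExt n Y).inv ≫ ((Ext R (ModuleCat.{u} R) n).map g.op).app Y =
      HomologicalComplex.homologyMap (psi φ.hom Y) n ≫ (P'.isoExt n Y).inv := by
  have h1 := ProjectiveResolution.isoLeftDerivedObj_hom_naturality g P' P φ.hom
    φ.hom_f_zero_comp_π_f_zero ((linearYoneda R (ModuleCat.{u} R)).obj Y).rightOp n
  have h2 := HomologicalComplex.homologyOp_hom_naturality (psi φ.hom Y) n
  have h1' : (P.isoLeftDerivedObj ((linearYoneda R (ModuleCat.{u} R)).obj Y).rightOp n).hom.unop ≫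
      ((Ext R (ModuleCat.{u} R) n).map g.op).app Y = 
      (HomologicalComplex.homologyMap ((((linearYoneda R (ModuleCat.{u} R)).obj Y).rightOp.mapHomologicalComplex
        (ComplexShape.down ℕ)).map φ.hom) n).unop ≫
      (P'.isoLeftDerivedObj ((linearYoneda R (ModuleCat.{u} R)).obj Y).rightOp n).hom.unop :=
    congr(($h1).unop)
  have h2' : ((P.complex.linearYonedaObj R Y).homologyOp n).hom.unop ≫ 
      (HomologicalComplex.homologyMap ((((linearYoneda R (ModuleCat.{u} R)).obj Y).rightOp.mapHomologicalComplex
        (ComplexShape.down ℕ)).map φ.hom) n).unop = HomologicalComplex.homologyMap (psi φ.hom Y) n ≫ 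
      ((P'.complex.linearYonedaObj R Y).homologyOp n).hom.unop  := congr(($h2).unop)
  change (((P.complex.linearYonedaObj R Y).homologyOp n).hom.unop ≫
    (P.isoLeftDerivedObj ((linearYoneda R (ModuleCat.{u} R)).obj Y).rightOp n).hom.unop) ≫ _ =
    _ ≫ (((P'.complex.linearYonedaObj R Y).homologyOp n).hom.unop ≫
    (P'.isoLeftDerivedObj ((linearYoneda R (ModuleCat.{u} R)).obj Y).rightOp n).hom.unop)
  refine (Category.assoc _ _ _).trans ?_
  refine (congrArg (fun t => ((P.complex.linearYonedaObj R Y).homologyOp n).hom.unop ≫ t) h1').trans ?_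
  refine (Category.assoc _ _ _).symm.trans ?_
  refine (congrArg (fun t => t ≫ 
    (P'.isoLeftDerivedObj ((linearYoneda R (ModuleCat.{u} R)).obj Y).rightOp n).hom.unop) h2').trans ?_
  exact Category.assoc _ _ _

lemma oldMk_nat {X X' : ModuleCat.{u} R} {g : X' ⟶ X} {P' : ProjectiveResolution X'}
    {P : ProjectiveResolution X} (φ : ProjectiveResolution.Hom P' P g) (Y : ModuleCat.{u} R) (n : ℕ)
    (f : Zc P Y n) : (((Ext R (ModuleCat.{u} R) n).map g.op).app Y).hom (oldMk P Y n f) =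
      oldMk P' Y n ⟨_, Zc_comp φ Y n f⟩ := by
  have h1 := isoExt_nat φ Y n
  have h1' := congr($h1 ((P.complex.linearYonedaObj R Y).homologyπ n (oldHom P Y n f)))
  refine h1'.trans ?_
  have h2 := HomologicalComplex.homologyπ_naturality (psi φ.hom Y) n
  have h2' := congr((P'.isoExt n Y).inv ($h2 (oldHom P Y n f)))
  refine h2'.trans ?_
  have hm : Function.Injective ((P'.complex.linearYonedaObj R Y).iCycles n) :=
      (ModuleCat.mono_iff_injective _).1 inferInstance
  have h3 : HomologicalComplex.cyclesMap (psi φ.hom Y) n (oldHom P Y n f) =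
      oldHom P' Y n ⟨_, Zc_comp φ Y n f⟩ := by
    apply hm
    have e1 := congr($(HomologicalComplex.cyclesMap_i (psi φ.hom Y) n) (oldHom P Y n f))
    have e2 := congr($(oldHom_i P Y n) f)
    have e3 := congr($(oldHom_i P' Y n) ⟨_, Zc_comp φ Y n f⟩)
    refine e1.trans (Eq.trans ?_ e3.symm)
    exact congr((psi φ.hom Y).f n $e2)
  exact congr((P'.isoExt n Y).inv ((P'.complex.linearYonedaObj R Y).homologyπ n $h3))

lemma extEquiv_nat (n : ℕ) {X X' : ModuleCat.{u} R} (g : X' ⟶ X) (Y : ModuleCat.{u} R)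
    (a : extModule R n X Y) :
    extEquiv n X' Y ((((Ext R (ModuleCat.{u} R) n).map g.op).app Y).hom a) =
      (Abelian.Ext.mk₀ g).comp (extEquiv n X Y a) (zero_add _) := by
  obtain ⟨f, rfl⟩ := oldMk_surj (projectiveResolution X) Y n a
  rw [oldMk_nat (resHom g (projectiveResolution X') (projectiveResolution X)),
    extEquiv_oldMk, extEquiv_oldMk, newMk_nat (resHom g (projectiveResolution X') (projectiveResolution X))]

end CofAux
end Layer1

section Layer2

open Abelian Opposite

variable {R : Type u} [CommRing R]

namespace CofAux

/-- `R/𝔞^t` -/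
noncomputable abbrev Xq (a : Ideal R) (t : ℕ) : ModuleCat.{u} R := ModuleCat.of R (R ⧸ a ^ t)

/-- transition map -/
noncomputable def tr (a : Ideal R) {s t : ℕ} (h : s ≤ t) : Xq a t ⟶ Xq a s :=
  ModuleCat.ofHom (Submodule.mapQ _ _ LinearMap.id (Ideal.pow_le_pow_right h))

lemma tr_comp (a : Ideal R) {s t v : ℕ} (h : s ≤ t) (h' : t ≤ v) :
    tr a h' ≫ tr a h = tr a (h.trans h') := by
  ext
  rfl

/-- restriction of Ext classes -/
noncomputable def res (a : Ideal R) {s t : ℕ} (h : s ≤ t) (M : ModuleCat.{u} R) (i : ℕ) :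
    Abelian.Ext (Xq a s) M i →ₗ[R] Abelian.Ext (Xq a t) M i where
  toFun α := (Abelian.Ext.mk₀ (tr a h)).comp α (zero_add i)
  map_add' α β := by simp
  map_smul' r α := by simp [Abelian.Ext.comp_smul]

lemma res_apply (a : Ideal R) {s t : ℕ} (h : s ≤ t) (M : ModuleCat.{u} R) (i : ℕ)
    (α : Abelian.Ext (Xq a s) M i) :
    res a h M i α = (Abelian.Ext.mk₀ (tr a h)).comp α (zero_add i) := rfl

lemma res_res (a : Ideal R) {s t v : ℕ} (h : s ≤ t) (h' : t ≤ v) (M : ModuleCat.{u} R) (i : ℕ)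
    (α : Abelian.Ext (Xq a s) M i) : res a h' M i (res a h M i α) = res a (h.trans h') M i α := by
  simp only [res_apply]
  rw [Abelian.Ext.mk₀_comp_mk₀_assoc, tr_comp]

lemma res_comp (a : Ideal R) {s t : ℕ} (h : s ≤ t) {M N : ModuleCat.{u} R} {i j k : ℕ}
    (α : Abelian.Ext (Xq a s) M i) (β : Abelian.Ext M N j) (hk : i + j = k) :
    res a h N k (α.comp β hk) = (res a h M i α).comp β hk := by
  simp only [res_apply]
  rw [Abelian.Ext.comp_assoc]
  omega

structure IsColim (a : Ideal R) (i : ℕ) (M : ModuleCat.{u} R) (H : Type u) [AddCommGroup H]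
    [Module R H] (ι : ∀ t, Abelian.Ext (Xq a t) M i →ₗ[R] H) : Prop where
  compat : ∀ (s t : ℕ) (h : s ≤ t) (α), ι t (res a h M i α) = ι s α
  surj : ∀ z, ∃ t α, ι t α = z
  ker : ∀ t α, ι t α = 0 → ∃ (t' : ℕ) (h : t ≤ t'), res a h M i α = 0

lemma colim_surj (D : ℕᵒᵖᵒᵖ ⥤ ModuleCat.{u} R) (c : Limits.Cocone D) (hc : Limits.IsColimit c)
    (z : c.pt) : ∃ (t : ℕ) (y : D.obj (op (op t))), (c.ι.app (op (op t))).hom y = z := by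
  have : Limits.PreservesFilteredColimitsOfSize.{0, 0} (forget (ModuleCat.{u} R)) :=
    Limits.preservesSmallestFilteredColimits_of_preservesFilteredColimits.{u, u} _
  obtain ⟨j, y, hy⟩ := Limits.Concrete.isColimit_exists_rep D hc z
  exact ⟨j.unop.unop, y, hy⟩

lemma colim_ker (D : ℕᵒᵖᵒᵖ ⥤ ModuleCat.{u} R) (c : Limits.Cocone D) (hc : Limits.IsColimit c)
    (t : ℕ) (y : D.obj (op (op t))) (h : (c.ι.app (op (op t))).hom y = 0) :
    ∃ (t' : ℕ) (h : t ≤ t'), (D.map (homOfLE h).op.op).hom y = 0 := by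
  have : Limits.PreservesFilteredColimitsOfSize.{0, 0} (forget (ModuleCat.{u} R)) :=
    Limits.preservesSmallestFilteredColimits_of_preservesFilteredColimits.{u, u} _
  have h' : c.ι.app (op (op t)) y = c.ι.app (op (op t)) 0 := by
    rw [map_zero]; exact h
  obtain ⟨j, f, hf⟩ := (Limits.IsColimit.eq_iff' hc y 0).1 h'
  rw [map_zero] at hf
  exact ⟨j.unop.unop, leOfHom f.unop.unop, hf⟩

/-- structure map -/
noncomputable def lcι (a : Ideal R) (i : ℕ) (M : ModuleCat.{u} R) (t : ℕ) :
    extModule R i (Xq a t) M →ₗ[R] ((localCohomology a i).obj M) :=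
  ((Limits.colimit.ι (localCohomology.diagram (localCohomology.idealPowersDiagram a) i)
    (op (op t))).app M).hom

/-- evaluated colimit -/
noncomputable def lcIsColimit (a : Ideal R) (i : ℕ) (M : ModuleCat.{u} R) :
    Limits.IsColimit (((evaluation (ModuleCat.{u} R) (ModuleCat.{u} R)).obj M).mapCocone
     (Limits.colimit.cocone (localCohomology.diagram (localCohomology.idealPowersDiagram a) i))) :=
  Limits.isColimitOfPreserves _ (Limits.colimit.isColimit _)

lemma isColim_localCohomology (a : Ideal R) (i : ℕ) (M : ModuleCat.{u} R) :
    ∃ ι, IsColim a i M ((localCohomology a i).obj M) ι := by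
  refine ⟨fun t => lcι a i M t ∘ₗ (extEquiv i (Xq a t) M).symm.toLinearMap, ?_, ?_, ?_⟩
  · intro s t h α
    obtain ⟨β, rfl⟩ := (extEquiv i _ M).surjective α
    rw [res_apply, ← extEquiv_nat]
    have := (((evaluation (ModuleCat.{u} R) (ModuleCat.{u} R)).obj M).mapCocone
     (Limits.colimit.cocone (localCohomology.diagram (localCohomology.idealPowersDiagram a) i))).w (homOfLE h).op.op
    refine (congrArg (lcι a i M t) ((extEquiv i (Xq a t) M).symm_apply_apply _)).trans ?_
    refine Eq.trans ?_ (congrArg (lcι a i M s) ((extEquiv i (Xq a s) M).symm_apply_apply _)).symm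
    exact congr($this β)
  · intro z
    obtain ⟨t, y, hy⟩ := colim_surj _ _ (lcIsColimit a i M) z
    exact ⟨t, extEquiv i (Xq a t) M y,
      (congrArg (lcι a i M t) ((extEquiv i (Xq a t) M).symm_apply_apply y)).trans hy⟩
  · intro t α h
    obtain ⟨β, rfl⟩ := (extEquiv i _ M).surjective α
    have h := (congrArg (lcι a i M t) ((extEquiv i (Xq a t) M).symm_apply_apply β)).symm.trans h
    obtain ⟨t', ht, hfg⟩ := colim_ker _ _ (lcIsColimit a i M) t β h
    refine ⟨t', ht, ?_⟩
    rw [res_apply, ← extEquiv_nat]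
    exact (congrArg (extEquiv i _ M) hfg).trans (map_zero _)

end CofAux
end Layer2

section Layer3a

variable {R : Type u} [CommRing R]

namespace CofAux

/-- postcomposition -/
noncomputable def postL (X : ModuleCat.{u} R) {A B : ModuleCat.{u} R} {i j k : ℕ}
    (β : Abelian.Ext A B j) (hk : i + j = k) : Abelian.Ext X A i →ₗ[R] Abelian.Ext X B k where
  toFun α := α.comp β hk
  map_add' α α' := by simp
  map_smul' r α := by simp [Abelian.Ext.smul_comp]

lemma postL_apply (X : ModuleCat.{u} R) {A B : ModuleCat.{u} R} {i j k : ℕ}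
    (β : Abelian.Ext A B j) (hk : i + j = k) (α : Abelian.Ext X A i) :
    postL X β hk α = α.comp β hk := rfl

/-- finite generation of Ext -/
def FE (X : ModuleCat.{u} R) (N : Type u) [AddCommGroup N] [Module R N] (i : ℕ) : Prop :=
  Module.Finite R (Abelian.Ext X (ModuleCat.of R N) i)

lemma finite_mid [IsNoetherianRing R] {A B C : Type*} [AddCommGroup A] [Module R A]
    [AddCommGroup B] [Module R B] [AddCommGroup C] [Module R C] (f : A →ₗ[R] B) (g : B →ₗ[R] C)
    (hA : Module.Finite R A) (hC : Module.Finite R C) (h : LinearMap.ker g ≤ LinearMap.range f) :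
    Module.Finite R B := by
  have := isNoetherian_of_isNoetherianRing_of_finite R A
  have := isNoetherian_of_isNoetherianRing_of_finite R C
  have h1 : (LinearMap.ker g).FG := by
    have : IsNoetherian R (LinearMap.range f) :=
      isNoetherian_of_surjective f.rangeRestrict f.range_rangeRestrict
    exact Module.Finite.iff_fg.1
      (Module.Finite.of_injective (Submodule.inclusion h) (Submodule.inclusion_injective h))
  have h2 : (LinearMap.range g).FG := IsNoetherian.noetherian _
  exact ⟨Submodule.fg_of_fg_map_of_fg_inf_ker g (by rwa [Submodule.map_top]) (by rwa [top_inf_eq])⟩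

section
variable {A B C : Type u} [AddCommGroup A] [Module R A]
    [AddCommGroup B] [Module R B] [AddCommGroup C] [Module R C] (f : A →ₗ[R] B) (g : B →ₗ[R] C)
    (hfg : Function.Exact f g)

/-- short complex -/
noncomputable def sc : ShortComplex (ModuleCat.{u} R) :=
  ShortComplex.mk (ModuleCat.ofHom f) (ModuleCat.ofHom g) (by
    ext x
    exact hfg.apply_apply_eq_zero x)

lemma sc_exact (hf : Function.Injective f) (hg : Function.Surjective g)
    (hfg : Function.Exact f g) : (sc f g hfg).ShortExact where
  exact := by
    rw [ShortComplex.moduleCat_exact_iff]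
    intro x hx
    exact (hfg x).1 hx
  mono_f := (ModuleCat.mono_iff_injective _).2 hf
  epi_g := (ModuleCat.epi_iff_surjective _).2 hg

variable [IsNoetherianRing R] {X : ModuleCat.{u} R}

lemma fe_mid (hf : Function.Injective f) (hg : Function.Surjective g)
    (hfg : Function.Exact f g) {i : ℕ} (hA : FE X A i) (hC : FE X C i) : FE X B i := by
  have hS := sc_exact f g hf hg hfg
  refine finite_mid (postL X (Abelian.Ext.mk₀ (sc f g hfg).f) (add_zero i))
    (postL X (Abelian.Ext.mk₀ (sc f g hfg).g) (add_zero i)) hA hC ?_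
  intro x hx
  obtain ⟨y, hy⟩ := Abelian.Ext.covariant_sequence_exact₂ _ hS x hx
  exact ⟨y, hy⟩

lemma fe_right (hf : Function.Injective f) (hg : Function.Surjective g)
    (hfg : Function.Exact f g) {i : ℕ} (hB : FE X B i) (hA : FE X A (i+1)) : FE X C i := by
  have hS := sc_exact f g hf hg hfg
  refine finite_mid (postL X (Abelian.Ext.mk₀ (sc f g hfg).g) (add_zero i))
    (postL X hS.extClass rfl) hB hA ?_
  intro x hx
  obtain ⟨y, hy⟩ := Abelian.Ext.covariant_sequence_exact₃ _ hS x rfl hx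
  exact ⟨y, hy⟩

lemma fe_left (hf : Function.Injective f) (hg : Function.Surjective g)
    (hfg : Function.Exact f g) {i : ℕ} (hC : FE X C i) (hB : FE X B (i+1)) : FE X A (i+1) := by
  have hS := sc_exact f g hf hg hfg
  refine finite_mid (postL X hS.extClass rfl)
    (postL X (Abelian.Ext.mk₀ (sc f g hfg).f) (add_zero (i+1))) hC hB ?_
  intro x hx
  obtain ⟨y, hy⟩ := Abelian.Ext.covariant_sequence_exact₁ _ hS x hx rfl
  exact ⟨y, hy⟩
end

lemma fe_zero_inj [IsNoetherianRing R] {A B : Type u} [AddCommGroup A] [Module R A]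
    [AddCommGroup B] [Module R B] (f : A →ₗ[R] B) (hf : Function.Injective f) 
    {X : ModuleCat.{u} R} (hB : FE X B 0) : FE X A 0 := by
  have : Mono (ModuleCat.ofHom f) := (ModuleCat.mono_iff_injective _).2 hf
  have hn : IsNoetherian R (Abelian.Ext X (ModuleCat.of R B) 0) :=
    @isNoetherian_of_isNoetherianRing_of_finite R _ _ _ _ _ hB
  exact Module.Finite.of_injective
    (postL X (Abelian.Ext.mk₀ (ModuleCat.ofHom f)) (add_zero 0))
    (fun a b h => Abelian.Ext.postcomp_mk₀_injective_of_mono X (ModuleCat.ofHom f) h)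

lemma fe_equiv {A B : Type u} [AddCommGroup A] [Module R A]
    [AddCommGroup B] [Module R B] (e : A ≃ₗ[R] B) {X : ModuleCat.{u} R} {i : ℕ} (hA : FE X A i) :
    FE X B i := by
  have : Module.Finite R (Abelian.Ext X (ModuleCat.of R A) i) := hA
  refine Module.Finite.of_surjective (postL X (Abelian.Ext.mk₀ (e.toModuleIso.hom)) (add_zero i)) ?_
  intro y
  refine ⟨postL X (Abelian.Ext.mk₀ (e.toModuleIso.inv)) (add_zero i) y, ?_⟩
  simp only [postL_apply, Abelian.Ext.comp_assoc_of_second_deg_zero, Abelian.Ext.mk₀_comp_mk₀]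
  rw [Iso.inv_hom_id]
  exact Abelian.Ext.comp_mk₀_id y

lemma fe_finite [IsNoetherianRing R] {A : Type u} [AddCommGroup A] [Module R A] [Module.Finite R A]
    (X : ModuleCat.{u} R) [Module.Finite R X] (i : ℕ) : FE X A i := by
  unfold FE
  infer_instance

lemma fe_subsingleton (X : ModuleCat.{u} R) (A : Type u) [AddCommGroup A] [Module R A]
    [Subsingleton A] (i : ℕ) : FE X A i := by
  have : Subsingleton (Abelian.Ext X (ModuleCat.of R A) i) := by
    have hz : Limits.IsZero (ModuleCat.of R A) := ModuleCat.isZero_of_subsingleton _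
    refine ⟨fun x y => ?_⟩
    rw [← Abelian.Ext.comp_mk₀_id x, ← Abelian.Ext.comp_mk₀_id y, hz.eq_of_src (𝟙 _) 0]
    simp
  unfold FE
  infer_instance

/-- cofinite without support condition -/
def Cof (a : Ideal R) (N : Type u) [AddCommGroup N] [Module R N] : Prop :=
  ∀ i, FE (ModuleCat.of R (R ⧸ a)) N i

/-- `0 :_N a` -/
def soc (a : Ideal R) (N : Type*) [AddCommGroup N] [Module R N] : Submodule R N :=
  Submodule.torsionBySet R N (a : Set R)

lemma mem_soc {a : Ideal R} {N : Type*} [AddCommGroup N] [Module R N] (n : N) :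
    n ∈ soc a N ↔ ∀ x ∈ a, x • n = 0 := by
  simp [soc]

/-- Hom(R/a,N) -/
noncomputable def homEquivSoc (a : Ideal R) (N : Type u) [AddCommGroup N] [Module R N] :
    ((R ⧸ a) →ₗ[R] N) ≃ₗ[R] soc a N where
  toFun f := ⟨f 1, by
    rw [mem_soc]
    intro x hx
    rw [← map_smul]
    have : x • (1 : R ⧸ a) = 0 := by
      rw [Algebra.smul_def, mul_one]
      exact Ideal.Quotient.eq_zero_iff_mem.2 hx
    rw [this, map_zero]⟩
  map_add' f g := rfl
  map_smul' f g := rfl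
  invFun n := Submodule.liftQ a (LinearMap.toSpanSingleton R N n.1) (by
    intro x hx
    exact (mem_soc n.1).1 n.2 x hx)
  left_inv f := by
    apply Submodule.linearMap_qext
    ext
    change (1 : R) • f 1 = f 1
    exact one_smul _ _
  right_inv n := by
    ext
    change (1 : R) • n.1 = n.1
    exact one_smul _ _

lemma fe_zero_iff (a : Ideal R) (N : Type u) [AddCommGroup N] [Module R N] :
    FE (ModuleCat.of R (R ⧸ a)) N 0 ↔ Module.Finite R (soc a N) := by
  have e : Abelian.Ext (ModuleCat.of R (R ⧸ a)) (ModuleCat.of R N) 0 ≃ₗ[R] soc a N :=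
    Abelian.Ext.linearEquiv₀ (R := R) ≪≫ₗ ModuleCat.homLinearEquiv ≪≫ₗ homEquivSoc a N
  exact Module.Finite.equiv_iff e

end CofAux
end Layer3a

section Layer3b

variable {R : Type u} [CommRing R]

namespace CofAux

lemma smul_ext_zero {a : Ideal R} {x : R} (hx : x ∈ a) {Y : ModuleCat.{u} R} {i : ℕ}
    (α : Abelian.Ext (ModuleCat.of R (R ⧸ a)) Y i) : x • α = 0 := by
  have h0 : x • 𝟙 (ModuleCat.of R (R ⧸ a)) = 0 := by
    ext
    change x • (Submodule.Quotient.mk (1:R) : R ⧸ a) = 0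
    rw [← Submodule.Quotient.mk_smul, Submodule.Quotient.mk_eq_zero, smul_eq_mul, mul_one]
    exact hx
  have : x • α = (Abelian.Ext.mk₀ (x • 𝟙 _)).comp α (zero_add i) := by
    simp [Abelian.Ext.mk₀_smul]
  rw [this, h0]
  simp

/-- kernel of multiplication -/
abbrev kx (x : R) (N : Type*) [AddCommGroup N] [Module R N] : Submodule R N :=
  LinearMap.ker (LinearMap.lsmul R N x)
/-- range of multiplication -/
abbrev rx (x : R) (N : Type*) [AddCommGroup N] [Module R N] : Submodule R N :=
  LinearMap.range (LinearMap.lsmul R N x)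

lemma exact_kr (x : R) (N : Type*) [AddCommGroup N] [Module R N] :
    Function.Exact (kx x N).subtype (LinearMap.lsmul R N x).rangeRestrict := by
  intro n
  simp [Subtype.ext_iff]

lemma exact_sub {N : Type*} [AddCommGroup N] [Module R N] (L : Submodule R N) :
    Function.Exact L.subtype L.mkQ := by
  rw [LinearMap.exact_iff]; simp

lemma finite_K [IsNoetherianRing R] {K N I D : Type*} [AddCommGroup K] [Module R K]
    [AddCommGroup N] [Module R N] [AddCommGroup I] [Module R I] [AddCommGroup D] [Module R D]
    (k : K →ₗ[R] N) (p : N →ₗ[R] I) (j : I →ₗ[R] N) (δ : D →ₗ[R] I) (hK : Module.Finite R K)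
    (hD : Module.Finite R D) (hjp : ∀ n, j (p n) = 0) (hp : ∀ n, p n = 0 → ∃ m, k m = n)
    (hj : ∀ n, j n = 0 → ∃ m, δ m = n) : Module.Finite R N := by
  have hle : LinearMap.ker j ≤ LinearMap.range δ := fun n hn => hj n hn
  have := isNoetherian_of_isNoetherianRing_of_finite R (LinearMap.range δ)
  have hker : Module.Finite R (LinearMap.ker j) :=
    Module.Finite.of_injective (Submodule.inclusion hle) (Submodule.inclusion_injective hle)
  refine finite_mid k (p.codRestrict (LinearMap.ker j) (fun n => hjp n)) hK hker ?_
  intro y hy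
  exact hp y (congrArg Subtype.val hy)

lemma lemmaK [IsNoetherianRing R] {a : Ideal R} {x : R} (hx : x ∈ a) (N : Type u) [AddCommGroup N]
    [Module R N] (hK : Cof a (kx x N)) (hC : Cof a (N ⧸ rx x N)) : Cof a N := by
  intro i
  have hS := sc_exact _ _ (kx x N).subtype_injective (LinearMap.lsmul R N x).surjective_rangeRestrict
    (exact_kr x N)
  have hT := sc_exact _ _ (rx x N).subtype_injective (rx x N).mkQ_surjective
    (exact_sub (rx x N))
  let p : Abelian.Ext (ModuleCat.of R (R ⧸ a)) (ModuleCat.of R N) i →ₗ[R]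
      Abelian.Ext (ModuleCat.of R (R ⧸ a)) (ModuleCat.of R (rx x N)) i :=
    postL _ (Abelian.Ext.mk₀ (ModuleCat.ofHom (LinearMap.lsmul R N x).rangeRestrict)) (add_zero i)
  let j : Abelian.Ext (ModuleCat.of R (R ⧸ a)) (ModuleCat.of R (rx x N)) i →ₗ[R]
      Abelian.Ext (ModuleCat.of R (R ⧸ a)) (ModuleCat.of R N) i :=
    postL _ (Abelian.Ext.mk₀ (ModuleCat.ofHom (rx x N).subtype)) (add_zero i)
  let k : Abelian.Ext (ModuleCat.of R (R ⧸ a)) (ModuleCat.of R (kx x N)) i →ₗ[R]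
      Abelian.Ext (ModuleCat.of R (R ⧸ a)) (ModuleCat.of R N) i :=
    postL _ (Abelian.Ext.mk₀ (ModuleCat.ofHom (kx x N).subtype)) (add_zero i)
  have hjp : ∀ α, j (p α) = 0 := by
    intro α
    rw [← smul_ext_zero hx α, Abelian.Ext.smul_eq_comp_mk₀]
    refine (Abelian.Ext.comp_assoc_of_second_deg_zero α _ _ (add_zero i)).trans ?_
    congr 1
    refine (Abelian.Ext.mk₀_comp_mk₀ _ _).trans ?_
    rfl
  have hp : ∀ n, p n = 0 → ∃ m, k m = n := fun y hy =>
    Abelian.Ext.covariant_sequence_exact₂ _ hS y hy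
  cases i with
  | zero =>
    have : Mono (ModuleCat.ofHom (rx x N).subtype) := hT.mono_f
    refine finite_K k p j (0 : PUnit.{u+1} →ₗ[R] _) (hK 0) inferInstance hjp hp ?_
    intro n hn
    refine ⟨0, ?_⟩
    rw [LinearMap.zero_apply]
    exact (Abelian.Ext.postcomp_mk₀_injective_of_mono _ (ModuleCat.ofHom (rx x N).subtype)
      (hn.trans (map_zero j).symm)).symm
  | succ i =>
    let δ : Abelian.Ext (ModuleCat.of R (R ⧸ a)) (ModuleCat.of R (N ⧸ rx x N)) i →ₗ[R]
      Abelian.Ext (ModuleCat.of R (R ⧸ a)) (ModuleCat.of R (rx x N)) (i+1) :=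
      postL _ hT.extClass rfl
    refine finite_K k p j δ (hK _) (hC i) hjp hp ?_
    intro n hn
    exact Abelian.Ext.covariant_sequence_exact₁ _ hT n hn rfl

lemma cof_mid [IsNoetherianRing R] {a : Ideal R} {N : Type u} [AddCommGroup N]
    [Module R N] (L : Submodule R N) (hL : Cof a L) (hC : Cof a (N ⧸ L)) : Cof a N :=
  fun i => fe_mid _ _ L.subtype_injective L.mkQ_surjective (exact_sub L) (hL i) (hC i)

lemma cof_kr [IsNoetherianRing R] {a : Ideal R} (x : R) {N : Type u} [AddCommGroup N]
    [Module R N] (hL : Cof a (kx x N)) (hC : Cof a (rx x N)) : Cof a N :=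
  fun i => fe_mid _ _ (kx x N).subtype_injective (LinearMap.lsmul R N x).surjective_rangeRestrict
    (exact_kr x N) (hL i) (hC i)

/-- the filtration pieces -/
def Ak (x : R) {N : Type*} [AddCommGroup N] [Module R N] (L : Submodule R N) (k : ℕ) :
    Submodule R (kx x N) :=
  (L.map (LinearMap.lsmul R N (x^k))).comap (kx x N).subtype

lemma mem_Ak {x : R} {N : Type*} [AddCommGroup N] [Module R N] {L : Submodule R N} {k : ℕ}
    {z : kx x N} : z ∈ Ak x L k ↔ ∃ n ∈ L, x^k • n = z.1 := by
  simp [Ak]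

lemma Ak_mono (x : R) {N : Type*} [AddCommGroup N] [Module R N] {L L' : Submodule R N}
    (h : L' ≤ L) {k k' : ℕ} (hk : k ≤ k') : Ak x L' k' ≤ Ak x L k := by
  intro z hz
  rw [mem_Ak] at hz ⊢
  obtain ⟨n, hn, e⟩ := hz
  refine ⟨x^(k'-k) • n, h (L'.smul_mem _ hn), ?_⟩
  rw [smul_smul, ← pow_add, ← e, Nat.add_sub_cancel' hk]

lemma Ak_eq {x : R} {N : Type*} [AddCommGroup N] [Module R N] {L L' : Submodule R N}
    (hx : ∀ n : N, ∃ k : ℕ, x^k • n = 0) (h : L' ≤ L) (hA : ∀ k, Ak x L k ≤ Ak x L' k) :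
    L' = L := by
  refine le_antisymm h ?_
  have : ∀ m : ℕ, ∀ n ∈ L, x^m • n = 0 → n ∈ L' := by
    intro m
    induction m with
    | zero => intro n _ h0; simp at h0; simp [h0]
    | succ m ih =>
      intro n hn h0
      have hz : x^m • n ∈ kx x N := by
        rw [LinearMap.mem_ker, LinearMap.lsmul_apply, smul_smul, ← pow_succ', h0]
      have h1 : (⟨_, hz⟩ : kx x N) ∈ Ak x L m := mem_Ak.2 ⟨n, hn, rfl⟩
      obtain ⟨n', hn', e⟩ := mem_Ak.1 (hA m h1)
      have h2 := ih (n - n') (L.sub_mem hn (h hn')) (by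
        rw [smul_sub, e]; exact sub_self _)
      have := L'.add_mem h2 hn'
      simpa using this
  intro n hn
  obtain ⟨k, hk⟩ := hx n
  exact this k n hn hk

lemma art1 {x : R} {N : Type*} [AddCommGroup N] [Module R N]
    (hx : ∀ n : N, ∃ k : ℕ, x^k • n = 0) [IsArtinian R (kx x N)] : IsArtinian R N := by
  rw [← monotone_stabilizes_iff_artinian]
  intro f
  let L : ℕ → Submodule R N := fun j => OrderDual.ofDual (f j)
  have hL : ∀ i j, i ≤ j → L j ≤ L i := fun i j h => f.monotone h
  -- diagonal
  have hst : ∀ g : ℕ → Submodule R (kx x N), (∀ i j, i ≤ j → g j ≤ g i) →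
      ∃ n, ∀ m, n ≤ m → g n = g m := by
    intro g hg
    exact IsArtinian.monotone_stabilizes (R := R) (M := kx x N)
      ⟨fun i => OrderDual.toDual (g i), fun i j h => hg i j h⟩
  obtain ⟨d, hd⟩ := hst (fun j => Ak x (L j) j) (fun i j h => Ak_mono x (hL _ _ h) h)
  choose J hJ using fun k => hst (fun j => Ak x (L j) k) (fun i j h => Ak_mono x (hL _ _ h) le_rfl)
  let n := (Finset.range d).sup J + d
  refine ⟨n, fun m hm => ?_⟩
  change L n = L m
  symm
  refine Ak_eq hx (hL _ _ hm) ?_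
  intro k
  by_cases hk : k < d
  · have h1 : J k ≤ n := (Finset.le_sup (f := J) (Finset.mem_range.2 hk)).trans (Nat.le_add_right _ _)
    have e1 := hJ k n h1
    have e2 := hJ k m (h1.trans hm)
    exact (e1.symm.trans e2).le
  · push Not at hk
    have hdn : d ≤ n := Nat.le_add_left _ _
    calc Ak x (L n) k ≤ Ak x (L d) d := Ak_mono x (hL _ _ hdn) hk
      _ = Ak x (L (max m k)) (max m k) := hd _ (hk.trans (le_max_right _ _))
      _ ≤ Ak x (L m) k := Ak_mono x (hL _ _ (le_max_left _ _)) (le_max_right _ _)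

lemma art_finset (s : Finset R) : ∀ (N : Type u) [AddCommGroup N] [Module R N]
    (_ : ∀ x ∈ s, ∀ n : N, ∃ k : ℕ, x^k • n = 0) 
    (_ : IsArtinian R (Submodule.torsionBySet R N (s : Set R))), IsArtinian R N := by
  classical
  induction s using Finset.induction_on with
  | empty =>
    intro N _ _ _ h
    have : Submodule.torsionBySet R N ((∅ : Finset R) : Set R) = ⊤ := by
      ext; simp
    rw [this] at h
    exact isArtinian_of_linearEquiv (Submodule.topEquiv (R := R) (M := N))
  | insert x s hxs ih =>
    intro N _ _ hx h
    have : IsArtinian R (kx x N) := by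
      apply ih
      · intro y hy n
        obtain ⟨k, hk⟩ := hx y (Finset.mem_insert_of_mem hy) n.1
        exact ⟨k, Subtype.ext hk⟩
      · let φ : Submodule.torsionBySet R (kx x N) (s : Set R) →ₗ[R]
            Submodule.torsionBySet R N ((insert x s : Finset R) : Set R) :=
          ((kx x N).subtype ∘ₗ Submodule.subtype _).codRestrict _ (by
            intro n
            rw [Submodule.mem_torsionBySet_iff]
            rintro ⟨y, hy⟩
            simp only [Finset.coe_insert, Set.mem_insert_iff] at hy
            rcases hy with rfl | hy
            · exact n.1.2
            · have := (Submodule.mem_torsionBySet_iff _ _).1 n.2 ⟨y, hy⟩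
              exact congrArg Subtype.val this)
        refine isArtinian_of_injective φ ?_
        intro u v huv
        have := congrArg Subtype.val huv
        exact Subtype.ext (Subtype.ext this)
    exact art1 (hx x (Finset.mem_insert_self _ _))

/-- torsion -/
def IsTor (a : Ideal R) (N : Type*) [AddCommGroup N] [Module R N] : Prop :=
  ∀ n : N, ∃ k : ℕ, ∀ x ∈ a^k, x • n = 0

lemma IsTor.pow {a : Ideal R} {N : Type*} [AddCommGroup N] [Module R N] (h : IsTor a N) {x : R}
    (hx : x ∈ a) (n : N) : ∃ k : ℕ, x^k • n = 0 := by
  obtain ⟨k, hk⟩ := h n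
  exact ⟨k, hk _ (Ideal.pow_mem_pow hx k)⟩

lemma IsTor.of_inj {a : Ideal R} {N N' : Type*} [AddCommGroup N] [Module R N] [AddCommGroup N']
    [Module R N'] (h : IsTor a N') (f : N →ₗ[R] N') (hf : Function.Injective f) : IsTor a N := by
  intro n
  obtain ⟨k, hk⟩ := h (f n)
  exact ⟨k, fun x hx => hf (by rw [map_smul, hk x hx, map_zero])⟩

lemma IsTor.of_surj {a : Ideal R} {N N' : Type*} [AddCommGroup N] [Module R N] [AddCommGroup N']
    [Module R N'] (h : IsTor a N) (f : N →ₗ[R] N') (hf : Function.Surjective f) : IsTor a N' := by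
  intro n
  obtain ⟨n, rfl⟩ := hf n
  obtain ⟨k, hk⟩ := h n
  exact ⟨k, fun x hx => (by rw [← map_smul, hk x hx, map_zero])⟩

lemma art_tor {a : Ideal R} (ha : a.FG) {N : Type u} [AddCommGroup N] [Module R N]
    (h : IsTor a N) [hs : IsArtinian R (soc a N)] : IsArtinian R N := by
  obtain ⟨s, rfl⟩ := ha
  refine art_finset s N (fun x hx n => h.pow (Ideal.subset_span hx) n) ?_
  have : soc (Ideal.span (s : Set R)) N = Submodule.torsionBySet R N (s : Set R) :=
    (Submodule.torsionBySet_eq_torsionBySet_span _).symm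
  rwa [this] at hs

lemma cof_equiv {a : Ideal R} {A B : Type u} [AddCommGroup A] [Module R A]
    [AddCommGroup B] [Module R B] (e : A ≃ₗ[R] B) (h : Cof a A) : Cof a B :=
  fun i => fe_equiv e (h i)

lemma cof_finite [IsNoetherianRing R] (a : Ideal R) (A : Type u) [AddCommGroup A] [Module R A]
    [Module.Finite R A] : Cof a A := fun i => fe_finite _ i

/-- a nested submodule -/
lemma cof_sub {a : Ideal R} {N : Type u} [AddCommGroup N] [Module R N] {B : Submodule R N}
    (C : Submodule R B) (h : Cof a (C.map B.subtype)) : Cof a C :=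
  cof_equiv (Submodule.equivMapOfInjective _ B.subtype_injective C).symm h

lemma map_subtype_lt {N : Type u} [AddCommGroup N] [Module R N] {B : Submodule R N}
    (C : Submodule R B) (h : C ≠ ⊤) : C.map B.subtype < B := by
  refine lt_of_le_of_ne (Submodule.map_subtype_le _ _) ?_
  intro h'
  apply h
  rw [eq_top_iff]
  rintro ⟨x, hx⟩ -
  rw [← h'] at hx
  obtain ⟨y, hy, rfl⟩ := hx
  exact hy

lemma finite_of_soc_top [IsNoetherianRing R] {a : Ideal R} {N : Type u} [AddCommGroup N]
    [Module R N] (h : FE (ModuleCat.of R (R ⧸ a)) N 0) (h' : ∀ x ∈ a, ∀ n : N, x • n = 0) :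
    Module.Finite R N := by
  rw [fe_zero_iff] at h
  have : soc a N = ⊤ := by
    rw [eq_top_iff]
    intro n _
    exact (mem_soc n).2 fun x hx => h' x hx n
  rw [this] at h
  exact Module.Finite.equiv (Submodule.topEquiv (R := R) (M := N))

lemma art2 [IsNoetherianRing R] {a : Ideal R} {A : Type u} [AddCommGroup A]
    [Module R A] [IsArtinian R A] (h0 : FE (ModuleCat.of R (R ⧸ a)) A 0) : Cof a A := by
  suffices h : ∀ B : Submodule R A, Cof a B from cof_equiv Submodule.topEquiv (h ⊤)
  intro B
  induction B using WellFoundedLT.induction with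
  | ind B ih =>
  have ih' : ∀ C : Submodule R B, C ≠ ⊤ → Cof a C := fun C hC =>
    cof_sub C (ih _ (map_subtype_lt C hC))
  by_cases h1 : ∃ x ∈ a, rx x B = ⊤
  · obtain ⟨x, hx, hr⟩ := h1
    have hq : Subsingleton (B ⧸ rx x B) := Submodule.Quotient.subsingleton_iff.2 hr
    by_cases hk : kx x B = ⊤
    · have : Subsingleton B := by
        refine ⟨fun u v => ?_⟩
        have : ∀ u : B, u = 0 := by
          intro u
          have hu : u ∈ rx x B := by rw [hr]; trivial
          obtain ⟨v, rfl⟩ := hu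
          have : v ∈ kx x B := by rw [hk]; trivial
          exact this
        rw [this u, this v]
      exact fun i => fe_subsingleton _ _ i
    · exact lemmaK hx _ (ih' _ hk) (fun i => fe_subsingleton _ _ i)
  · push Not at h1
    by_cases h2 : ∃ x ∈ a, kx x B ≠ ⊤
    · obtain ⟨x, hx, hk⟩ := h2
      exact cof_kr x (ih' _ hk) (ih' _ (h1 x hx))
    · push Not at h2
      have := finite_of_soc_top (fe_zero_inj B.subtype B.subtype_injective h0) (fun x hx n => by
        have : n ∈ kx x B := by rw [h2 x hx]; trivial
        exact this)
      exact cof_finite a B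

end CofAux
end Layer3b

section Layer3c

variable {R : Type u} [CommRing R]

namespace CofAux

lemma artinian_quot {A : Type*} [CommRing A] [IsNoetherianRing A] (I : Ideal A)
    (h : ∀ p : Ideal A, p.IsPrime → I ≤ p → p.IsMaximal) : IsArtinianRing (A ⧸ I) := by
  rw [isArtinianRing_iff_isNoetherianRing_krullDimLE_zero]
  refine ⟨inferInstance, Ring.KrullDimLE.mk₀ ?_⟩
  intro Q hQ
  have h1 : (Q.comap (Ideal.Quotient.mk I)).IsMaximal := by
    apply h _ (Ideal.IsPrime.comap _)
    intro x hx
    rw [Ideal.mem_comap, Ideal.Quotient.eq_zero_iff_mem.2 hx]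
    exact Q.zero_mem
  have h2 := Ideal.map_comap_of_surjective _ (Ideal.Quotient.mk_surjective (I := I)) Q
  rcases Ideal.map_eq_top_or_isMaximal_of_surjective (Ideal.Quotient.mk I)
    Ideal.Quotient.mk_surjective h1 with h3 | h3
  · rw [h2] at h3
    exact absurd h3 hQ.ne_top
  · rwa [h2] at h3

lemma artinian_killed {A : Type*} [CommRing A] {M : Type*} [AddCommGroup M] [Module A M]
    [Module.Finite A M] (I : Ideal A) [IsArtinianRing (A ⧸ I)] (h : ∀ x ∈ I, ∀ m : M, x • m = 0) :
    IsArtinian A M := by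
  have hM : Module.IsTorsionBySet A M (I : Set A) := fun m x => h x.1 x.2 m
  letI := hM.module
  haveI : IsScalarTower A (A ⧸ I) M := hM.isScalarTower
  have : Module.Finite (A ⧸ I) M := Module.Finite.of_restrictScalars_finite A (A ⧸ I) M
  have : IsArtinian (A ⧸ I) M := inferInstance
  exact isArtinian_of_surjective_algebraMap (R := A ⧸ I) (Ideal.Quotient.mk_surjective (I := I))

lemma exists_kill (S : Submonoid R) (M : Type*) [AddCommGroup M] [Module R M] [hM : Module.Finite R M]
    (h : ∀ m : M, ∃ s ∈ S, s • m = 0) : ∃ s ∈ S, ∀ m : M, s • m = 0 := by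
  obtain ⟨T, hT⟩ := hM.fg_top
  choose s hs hs0 using h
  refine ⟨∏ m ∈ T, s m, Submonoid.prod_mem _ (fun m _ => hs m), ?_⟩
  intro m
  have hm : m ∈ Submodule.span R (T : Set M) := by rw [hT]; trivial
  classical
  induction hm using Submodule.span_induction with
  | mem x hx =>
    rw [← Finset.prod_erase_mul _ _ hx, mul_smul, hs0, smul_zero]
  | zero => simp
  | add x y _ _ hx hy => rw [smul_add, hx, hy, add_zero]
  | smul r x _ hx => rw [smul_comm, hx, smul_zero]

lemma exists_kill_ideal [IsNoetherianRing R] (S : Submonoid R) (a : Ideal R) {M : Type*}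
    [AddCommGroup M] [Module R M] (n : M)
    (h : ∀ x ∈ a, ∃ s ∈ S, s • x • n = 0) : ∃ s ∈ S, s • n ∈ soc a M := by
  obtain ⟨s, hs, h0⟩ := exists_kill S (Submodule.map (LinearMap.toSpanSingleton R M n) a) (by
    rintro ⟨_, x, hx, rfl⟩
    obtain ⟨s, hs, h0⟩ := h x hx
    exact ⟨s, hs, Subtype.ext h0⟩)
  refine ⟨s, hs, (mem_soc _).2 fun x hx => ?_⟩
  have := congrArg Subtype.val (h0 ⟨_, x, hx, rfl⟩)
  rw [smul_comm]
  exact this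

/-- complement of the union of the minimal primes -/
def Sa (a : Ideal R) : Submonoid R where
  carrier := {s | ∀ p ∈ a.minimalPrimes, s ∉ p}
  one_mem' := fun p hp h => hp.1.1.ne_top ((Ideal.eq_top_iff_one _).2 h)
  mul_mem' := fun {s t} hs ht p hp h => (hp.1.1.mem_or_mem h).elim (hs p hp) (ht p hp)

lemma mem_Sa {a : Ideal R} {s : R} : s ∈ Sa a ↔ ∀ p ∈ a.minimalPrimes, s ∉ p := Iff.rfl

/-- dim R/a ≤ 1 -/
def DimOne (a : Ideal R) : Prop := ∀ q p : Ideal R, q.IsPrime → p.IsPrime → a ≤ q → q < p →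
  p.IsMaximal

lemma artinian_ii [IsNoetherianRing R] {a : Ideal R} (hd : DimOne a) {s : R} (hs : s ∈ Sa a) :
    IsArtinianRing (R ⧸ (a ⊔ Ideal.span {s})) := by
  apply artinian_quot
  intro p hp hle
  have h1 : a ≤ p := le_sup_left.trans hle
  have h2 : s ∈ p := hle (Ideal.mem_sup_right (Ideal.mem_span_singleton_self s))
  obtain ⟨q, hq, hqp⟩ := Ideal.exists_minimalPrimes_le h1
  refine hd q p hq.1.1 hp hq.1.2 (lt_of_le_of_ne hqp ?_)
  rintro rfl
  exact hs q hq h2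

lemma cof_ii [IsNoetherianRing R] {a : Ideal R} (hd : DimOne a) {N : Type u} [AddCommGroup N]
    [Module R N] (ht : IsTor a N) (hS : ∀ n : N, ∃ s ∈ Sa a, s • n = 0)
    (h0 : FE (ModuleCat.of R (R ⧸ a)) N 0) : Cof a N := by
  have hfin := (fe_zero_iff a N).1 h0
  obtain ⟨s, hs, hk⟩ := exists_kill (Sa a) (soc a N) (by
    rintro ⟨n, hn⟩
    obtain ⟨s, hs, h⟩ := hS n
    exact ⟨s, hs, Subtype.ext h⟩)
  have := artinian_ii hd hs
  have : IsArtinian R (soc a N) := artinian_killed (a ⊔ Ideal.span {s}) (by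
    intro x hx m
    obtain ⟨y, hy, z, hz, rfl⟩ := Submodule.mem_sup.1 hx
    obtain ⟨r, rfl⟩ := Ideal.mem_span_singleton'.1 hz
    rw [add_smul, mul_smul, hk, smul_zero, add_zero]
    exact Subtype.ext ((mem_soc m.1).1 m.2 y hy))
  have : IsArtinian R N := art_tor (IsNoetherian.noetherian a) ht
  exact art2 h0

lemma artinian_i [IsNoetherianRing R] (a : Ideal R) :
    IsArtinianRing (Localization (Sa a) ⧸ a.map (algebraMap R (Localization (Sa a)))) := by
  have : IsNoetherianRing (Localization (Sa a)) := 
    IsLocalization.isNoetherianRing (Sa a) _ inferInstance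
  have key : ∀ Q : Ideal (Localization (Sa a)), Q.IsPrime → 
      a.map (algebraMap R (Localization (Sa a))) ≤ Q →
      Q.comap (algebraMap R (Localization (Sa a))) ∈ a.minimalPrimes := by
    intro Q hQ hle
    have h1 : a ≤ Q.comap (algebraMap R (Localization (Sa a))) := Ideal.map_le_iff_le_comap.1 hle
    obtain ⟨hp, hdis⟩ := (IsLocalization.isPrime_iff_isPrime_disjoint (Sa a) _ Q).1 hQ
    have hsub : ((Q.comap (algebraMap R (Localization (Sa a))) : Ideal R) : Set R) ⊆ 
        ⋃ i ∈ ((Ideal.finite_minimalPrimes_of_isNoetherianRing R a).toFinset : Set (Ideal R)), (i : Set R) := by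
      intro x hx
      by_contra hcon
      refine Set.disjoint_left.1 hdis (?_ : x ∈ (Sa a : Set R)) hx
      intro p hp hxp
      apply hcon
      simp only [Set.Finite.coe_toFinset, Set.mem_iUnion]
      exact ⟨p, hp, hxp⟩
    obtain ⟨p, hp', hle'⟩ := (Ideal.subset_union_prime (f := fun i => i) ⊥ ⊥ (by
      intro i hi _ _
      rw [Set.Finite.mem_toFinset] at hi
      exact hi.1.1)).1 hsub
    rw [Set.Finite.mem_toFinset] at hp'
    have : p ≤ Q.comap (algebraMap R (Localization (Sa a))) := hp'.2 ⟨hp, h1⟩ hle'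
    rwa [le_antisymm hle' this]
  apply artinian_quot
  intro Q hQ hle
  obtain ⟨m, hm, hQm⟩ := Ideal.exists_le_maximal Q hQ.ne_top
  have h1 := key Q hQ hle
  have h2 := key m hm.isPrime (hle.trans hQm)
  have h3 := le_antisymm (h2.2 ⟨h1.1.1, h1.1.2⟩ (Ideal.comap_mono hQm)) (Ideal.comap_mono hQm)
  have h4 := congrArg (Ideal.map (algebraMap R (Localization (Sa a)))) h3
  have e1 := IsLocalization.map_under (Sa a) (Localization (Sa a)) Q
  have e2 := IsLocalization.map_under (Sa a) (Localization (Sa a)) m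
  have : Q = m := e1.symm.trans (h4.symm.trans e2)
  rwa [this]

lemma loc_artinian [IsNoetherianRing R] {a : Ideal R} {N : Type u} [AddCommGroup N]
    [Module R N] (ht : IsTor a N) (h0 : FE (ModuleCat.of R (R ⧸ a)) N 0) :
    IsArtinian (Localization (Sa a)) (LocalizedModule (Sa a) N) := by
  have hfin := (fe_zero_iff a N).1 h0
  let Rs := Localization (Sa a)
  have : IsNoetherianRing Rs := 
    IsLocalization.isNoetherianRing (Sa a) _ inferInstance
  let f := LocalizedModule.mkLinearMap (Sa a) N
  let I := a.map (algebraMap R Rs)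
  have hI : ∀ z : LocalizedModule (Sa a) N, (∀ x ∈ a, x • z = 0) ↔ z ∈ soc I (LocalizedModule (Sa a) N) := by
    intro z
    constructor
    · intro h
      unfold soc
      have : Submodule.torsionBySet Rs (LocalizedModule (Sa a) N) (I : Set Rs) = _ :=
        (Submodule.torsionBySet_eq_torsionBySet_span _).symm
      rw [this, Submodule.mem_torsionBySet_iff]
      rintro ⟨_, x, hx, rfl⟩
      change algebraMap R Rs x • z = 0
      rw [algebraMap_smul]
      exact h x hx
    · intro h x hx
      rw [← algebraMap_smul Rs]
      exact (mem_soc z).1 h _ (Ideal.mem_map_of_mem _ hx)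
  have hpow : ∀ k, (a ^ k).map (algebraMap R Rs) = I ^ k := fun k => Ideal.map_pow _ _ k
  have htor : IsTor I (LocalizedModule (Sa a) N) := by
    intro z
    obtain ⟨⟨n, s⟩, rfl⟩ := IsLocalizedModule.mk'_surjective (Sa a) f z
    obtain ⟨k, hk⟩ := ht n
    refine ⟨k, ?_⟩
    intro x hx
    rw [← hpow] at hx
    refine Submodule.span_induction (p := fun x _ => x • (IsLocalizedModule.mk' f n s) = 0) ?_ ?_ ?_ ?_ hx
    · rintro _ ⟨x, hx, rfl⟩
      change algebraMap R Rs x • _ = 0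
      rw [algebraMap_smul, ← IsLocalizedModule.mk'_smul, hk x hx, IsLocalizedModule.mk'_zero]
    · simp
    · intro x y _ _ hx hy
      rw [add_smul, hx, hy, add_zero]
    · intro r x _ hx
      rw [smul_assoc, hx, smul_zero]
  have hfin' : Module.Finite Rs (soc I (LocalizedModule (Sa a) N)) := by
    obtain ⟨T, hT⟩ := Module.Finite.iff_fg.1 hfin
    rw [Module.Finite.iff_fg]
    classical
    refine ⟨T.image f, ?_⟩
    apply le_antisymm
    · rw [Submodule.span_le]
      intro z hz
      simp only [Finset.coe_image] at hz
      obtain ⟨n, hn, rfl⟩ := hz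
      rw [SetLike.mem_coe, ← hI]
      intro x hx
      have : n ∈ soc a N := by rw [← hT]; exact Submodule.subset_span hn
      rw [← map_smul, (mem_soc n).1 this x hx, map_zero]
    · intro z hz
      rw [← hI] at hz
      obtain ⟨⟨n, s⟩, rfl⟩ := IsLocalizedModule.mk'_surjective (Sa a) f z
      simp only [Function.uncurry_apply_pair] at hz ⊢
      obtain ⟨t, ht', h⟩ := exists_kill_ideal (Sa a) a n (by
        intro x hx
        have := hz x hx
        rw [← IsLocalizedModule.mk'_smul, IsLocalizedModule.mk'_eq_zero,
          IsLocalizedModule.eq_zero_iff (Sa a)] at this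
        obtain ⟨c, hc⟩ := this
        exact ⟨c.1, c.2, hc⟩)
      have h2 : f (t • n) ∈ Submodule.span Rs ((T.image f : Finset _) : Set (LocalizedModule (Sa a) N)) := by
        have h3 : t • n ∈ Submodule.span R (T : Set N) := by rw [hT]; exact h
        have h4 : f (t • n) ∈ (Submodule.span R (T : Set N)).map f := ⟨_, h3, rfl⟩
        rw [Submodule.map_span] at h4
        rw [Finset.coe_image]
        exact Submodule.span_le_restrictScalars R Rs _ h4
      have h5 : IsLocalizedModule.mk' f n s = IsLocalization.mk' Rs (1:R) (s * ⟨t, ht'⟩) • f (t • n) := by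
        rw [← IsLocalizedModule.mk'_one (Sa a) f (t • n), IsLocalizedModule.mk'_smul_mk']
        rw [one_smul, mul_one, mul_comm]
        exact (IsLocalizedModule.mk'_cancel_left f n (⟨t, ht'⟩ : Sa a) s).symm
      rw [h5]
      exact Submodule.smul_mem _ _ h2
  have := artinian_i a
  have : IsArtinian Rs (soc I (LocalizedModule (Sa a) N)) := artinian_killed I (by
    intro x hx m
    exact Subtype.ext ((mem_soc m.1).1 m.2 x hx))
  exact art_tor (IsNoetherian.noetherian I) htor

end CofAux
end Layer3c

section Layer3d

variable {R : Type u} [CommRing R]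

namespace CofAux

/-- density w.r.t. a multiplicative set -/
def Dn (S : Submonoid R) {N : Type*} [AddCommGroup N] [Module R N] (C : Submodule R N) : Prop :=
  ∀ n : N, ∃ s ∈ S, s • n ∈ C

lemma loc_lt (S : Submonoid R) {N : Type u} [AddCommGroup N] [Module R N] {B : Submodule R N}
    (C : Submodule R B) (h : ¬ Dn S C) :
    Submodule.localized' (Localization S) S (LocalizedModule.mkLinearMap S N) (C.map B.subtype) <
      Submodule.localized' (Localization S) S (LocalizedModule.mkLinearMap S N) B := by
  refine lt_of_le_of_ne ?_ ?_
  · rintro _ ⟨m, hm, s, rfl⟩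
    exact ⟨m, Submodule.map_subtype_le _ _ hm, s, rfl⟩
  · intro heq
    apply h
    intro b
    have hb : LocalizedModule.mkLinearMap S N b.1 ∈ 
        Submodule.localized' (Localization S) S (LocalizedModule.mkLinearMap S N) B :=
      ⟨b.1, b.2, 1, IsLocalizedModule.mk'_one _ _ _⟩
    rw [← heq] at hb
    obtain ⟨m, ⟨c, hc, rfl⟩, s, hs⟩ := hb
    rw [IsLocalizedModule.mk'_eq_iff] at hs
    have hs : LocalizedModule.mkLinearMap S N c.1 = LocalizedModule.mkLinearMap S N (s.1 • b.1) := by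
      rw [map_smul]; exact hs
    obtain ⟨t, ht⟩ := (IsLocalizedModule.eq_iff_exists S (LocalizedModule.mkLinearMap S N)).1 hs
    refine ⟨t.1 * s.1, S.mul_mem t.2 s.2, ?_⟩
    have : (t.1 * s.1) • b = t.1 • c := by
      apply Subtype.ext
      rw [mul_smul]
      exact ht.symm
    rw [this]
    exact C.smul_mem _ hc

lemma theoremA_step [IsNoetherianRing R] {a : Ideal R} (hd : DimOne a) {B : Type u} [AddCommGroup B]
    [Module R B] (ht : IsTor a B) (h0 : FE (ModuleCat.of R (R ⧸ a)) B 0)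
    (h1 : FE (ModuleCat.of R (R ⧸ a)) B 1) 
    (ih : ∀ C : Submodule R B, ¬ Dn (Sa a) C → FE (ModuleCat.of R (R ⧸ a)) C 0 →
      FE (ModuleCat.of R (R ⧸ a)) C 1 → Cof a C) : Cof a B := by
  have k0 : ∀ C : Submodule R B, FE (ModuleCat.of R (R ⧸ a)) C 0 := fun C =>
    fe_zero_inj C.subtype C.subtype_injective h0
  have k1 : ∀ x : R, FE (ModuleCat.of R (R ⧸ a)) (kx x B) 1 := fun x =>
    fe_left _ _ (kx x B).subtype_injective (LinearMap.lsmul R B x).surjective_rangeRestrict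
      (exact_kr x B) (k0 _) h1
  have r1 : ∀ x : R, Cof a (kx x B) → FE (ModuleCat.of R (R ⧸ a)) (rx x B) 1 := fun x hc =>
    fe_right _ _ (kx x B).subtype_injective (LinearMap.lsmul R B x).surjective_rangeRestrict
      (exact_kr x B) h1 (hc 2)
  by_cases c1 : ∃ x ∈ a, Dn (Sa a) (rx x B)
  · obtain ⟨x, hx, hr⟩ := c1
    by_cases hk : Dn (Sa a) (kx x B)
    · refine cof_ii hd ht (fun b => ?_) h0
      obtain ⟨s, hs, b', hb'⟩ := hr b
      obtain ⟨t, ht, hb⟩ := hk b'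
      refine ⟨t * s, (Sa a).mul_mem ht hs, ?_⟩
      rw [mul_smul, ← hb', ← map_smul]
      exact hb
    · have hK := ih _ hk (k0 _) (k1 x)
      refine lemmaK hx _ hK ?_
      refine cof_ii hd (ht.of_surj _ (rx x B).mkQ_surjective) ?_ ?_
      · intro n
        obtain ⟨b, rfl⟩ := (rx x B).mkQ_surjective n
        obtain ⟨s, hs, h⟩ := hr b
        refine ⟨s, hs, ?_⟩
        rw [← map_smul, ← LinearMap.mem_ker, Submodule.ker_mkQ]
        exact h
      · exact fe_right _ _ (rx x B).subtype_injective (rx x B).mkQ_surjective (exact_sub _) h0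
          (r1 x hK)
  · push Not at c1
    by_cases c2 : ∃ x ∈ a, ¬ Dn (Sa a) (kx x B)
    · obtain ⟨x, hx, hk⟩ := c2
      have hK := ih _ hk (k0 _) (k1 x)
      exact cof_kr x hK (ih _ (c1 x hx) (k0 _) (r1 x hK))
    · push Not at c2
      have hF := (fe_zero_iff a B).1 h0
      have hcF : Cof a (soc a B) := cof_finite a _
      refine cof_mid (soc a B) hcF ?_
      refine cof_ii hd (ht.of_surj _ (soc a B).mkQ_surjective) ?_ ?_
      · intro n
        obtain ⟨b, rfl⟩ := (soc a B).mkQ_surjective n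
        obtain ⟨s, hs, h⟩ := exists_kill_ideal (Sa a) a b (by
          intro x hx
          obtain ⟨s, hs, h⟩ := c2 x hx b
          refine ⟨s, hs, ?_⟩
          rw [smul_comm]
          exact h)
        refine ⟨s, hs, ?_⟩
        rw [← map_smul, ← LinearMap.mem_ker, Submodule.ker_mkQ]
        exact h
      · exact fe_right _ _ (soc a B).subtype_injective (soc a B).mkQ_surjective (exact_sub _) h0
          (hcF 1)

theorem theoremA [IsNoetherianRing R] {a : Ideal R} (hd : DimOne a) {N : Type u} [AddCommGroup N]
    [Module R N] (ht : IsTor a N) (h0 : FE (ModuleCat.of R (R ⧸ a)) N 0)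
    (h1 : FE (ModuleCat.of R (R ⧸ a)) N 1) : Cof a N := by
  have hart := loc_artinian ht h0
  let f := LocalizedModule.mkLinearMap (Sa a) N
  suffices h : ∀ L : Submodule (Localization (Sa a)) (LocalizedModule (Sa a) N), ∀ B : Submodule R N,
      Submodule.localized' (Localization (Sa a)) (Sa a) f B = L → 
      FE (ModuleCat.of R (R ⧸ a)) B 0 → FE (ModuleCat.of R (R ⧸ a)) B 1 → Cof a B from
    cof_equiv Submodule.topEquiv (h _ ⊤ rfl (fe_equiv Submodule.topEquiv.symm h0)
      (fe_equiv Submodule.topEquiv.symm h1))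
  intro L
  induction L using WellFoundedLT.induction with
  | ind L ih =>
  rintro B rfl b0 b1
  refine theoremA_step hd (ht.of_inj _ B.subtype_injective) b0 b1 ?_
  intro C hC c0 c1
  have e := Submodule.equivMapOfInjective _ B.subtype_injective C
  exact cof_sub C (ih _ (loc_lt (Sa a) C hC) _ rfl (fe_equiv e c0) (fe_equiv e c1))

end CofAux
end Layer3d

section Layer4a

variable {R : Type u} [CommRing R]

namespace CofAux

/-- torsion submodule -/
def tor (a : Ideal R) (M : Type*) [AddCommGroup M] [Module R M] : Submodule R M where
  carrier := {m | ∃ k : ℕ, ∀ x ∈ a^k, x • m = 0}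
  zero_mem' := ⟨0, fun x _ => smul_zero x⟩
  add_mem' := by
    rintro m n ⟨k, hk⟩ ⟨l, hl⟩
    refine ⟨max k l, fun x hx => ?_⟩
    rw [smul_add, hk x (Ideal.pow_le_pow_right (le_max_left _ _) hx),
      hl x (Ideal.pow_le_pow_right (le_max_right _ _) hx), add_zero]
  smul_mem' := by
    rintro r m ⟨k, hk⟩
    exact ⟨k, fun x hx => by rw [smul_comm, hk x hx, smul_zero]⟩

lemma mem_tor {a : Ideal R} {M : Type*} [AddCommGroup M] [Module R M] {m : M} :
    m ∈ tor a M ↔ ∃ k : ℕ, ∀ x ∈ a^k, x • m = 0 := Iff.rfl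

lemma isTor_tor (a : Ideal R) (M : Type*) [AddCommGroup M] [Module R M] : IsTor a (tor a M) := by
  rintro ⟨m, k, hk⟩
  exact ⟨k, fun x hx => Subtype.ext (hk x hx)⟩

/-- uniform torsion exponent for a finite submodule -/
lemma isTor_uniform {a : Ideal R} {M : Type*} [AddCommGroup M] [Module R M]
    [hM : Module.Finite R M] (h : IsTor a M) : ∃ k : ℕ, ∀ m : M, ∀ x ∈ a^k, x • m = 0 := by
  obtain ⟨T, hT⟩ := hM.fg_top
  choose k hk using h
  refine ⟨T.sup k, ?_⟩
  intro m
  have hm : m ∈ Submodule.span R (T : Set M) := by rw [hT]; trivial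
  induction hm using Submodule.span_induction with
  | mem m hm => exact fun x hx => hk m x (Ideal.pow_le_pow_right (Finset.le_sup hm) hx)
  | zero => simp
  | add m n _ _ hm hn => intro x hx; rw [smul_add, hm x hx, hn x hx, add_zero]
  | smul r m _ hm => intro x hx; rw [smul_comm, hm x hx, smul_zero]

/-- torsion-free -/
def TF (a : Ideal R) (M : Type*) [AddCommGroup M] [Module R M] : Prop :=
  ∀ m : M, (∀ x ∈ a, x • m = 0) → m = 0

lemma TF.pow {a : Ideal R} {M : Type*} [AddCommGroup M] [Module R M] (h : TF a M) (k : ℕ) :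
    ∀ m : M, (∀ x ∈ a^k, x • m = 0) → m = 0 := by
  induction k with
  | zero => intro m hm; simpa using hm 1 (by simp)
  | succ k ih =>
    intro m hm
    apply h
    intro x hx
    apply ih
    intro y hy
    rw [smul_smul]
    exact hm _ (by rw [pow_succ]; exact Ideal.mul_mem_mul hy hx)

lemma tf_quot [IsNoetherianRing R] (a : Ideal R) (M : Type*) [AddCommGroup M] [Module R M] :
    TF a (M ⧸ tor a M) := by
  intro m hm
  obtain ⟨m, rfl⟩ := (tor a M).mkQ_surjective m
  have h1 : ∀ x ∈ a, x • m ∈ tor a M := by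
    intro x hx
    have := hm x hx
    rwa [← map_smul, ← LinearMap.mem_ker, Submodule.ker_mkQ] at this
  have h2 : IsTor a (Submodule.map (LinearMap.toSpanSingleton R M m) a) := by
    rintro ⟨_, x, hx, rfl⟩
    obtain ⟨k, hk⟩ := h1 x hx
    exact ⟨k, fun y hy => Subtype.ext (hk y hy)⟩
  obtain ⟨k, hk⟩ := isTor_uniform h2
  rw [← LinearMap.mem_ker, Submodule.ker_mkQ]
  refine ⟨k + 1, fun x hx => ?_⟩
  rw [pow_succ] at hx
  refine Submodule.smul_induction_on hx ?_ ?_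
  · intro y hy z hz
    rw [smul_assoc]
    exact congrArg Subtype.val (hk ⟨_, z, hz, rfl⟩ y hy)
  · intro y z hy hz
    rw [add_smul, hy, hz, add_zero]

lemma tor_injective [IsNoetherianRing R] (a : Ideal R) (E : Type u) [AddCommGroup E] [Module R E]
    [Module.Injective R E] : Module.Injective R (tor a E) := by
  apply Module.Baer.injective
  intro I g
  obtain ⟨k, hk⟩ : ∃ k : ℕ, ∀ y : I, ∀ x ∈ a^k, x • g y = 0 := by
    have : IsTor a (LinearMap.range g) := (isTor_tor a E).of_inj _ (Submodule.subtype_injective _)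
    obtain ⟨k, hk⟩ := isTor_uniform this
    exact ⟨k, fun y x hx => congrArg Subtype.val (hk ⟨_, y, rfl⟩ x hx)⟩
  obtain ⟨c, hc⟩ := Ideal.exists_pow_inf_eq_pow_smul a (M := R) (I : Submodule R R)
  let j : I →ₗ[R] (R ⧸ a^(k+c)) := (a^(k+c)).mkQ ∘ₗ I.subtype
  have hker : LinearMap.ker j ≤ LinearMap.ker ((tor a E).subtype ∘ₗ g) := by
    rintro ⟨y, hy⟩ h
    have h' : y ∈ a^(k+c) := by
      have : (a^(k+c)).mkQ y = 0 := h
      rwa [← LinearMap.mem_ker, Submodule.ker_mkQ] at this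
    have h2 : y ∈ a^k • (I : Submodule R R) := by
      have := hc (k+c) (Nat.le_add_left _ _)
      have h3 : y ∈ a^(k+c) • (⊤ : Submodule R R) ⊓ I := ⟨by simpa using h', hy⟩
      rw [this, Nat.add_sub_cancel] at h3
      exact Submodule.smul_mono le_rfl inf_le_right h3
    have h4 : ∀ z ∈ a^k • (I : Submodule R R), ∃ hz : z ∈ I, g ⟨z, hz⟩ = 0 := by
      intro z hz
      refine Submodule.smul_induction_on hz ?_ ?_
      · intro x hx w hw
        refine ⟨I.smul_mem x hw, ?_⟩
        exact (map_smul g x ⟨w, hw⟩).trans (hk _ x hx)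
      · rintro u v ⟨hu, eu⟩ ⟨hv, ev⟩
        refine ⟨I.add_mem hu hv, ?_⟩
        exact (map_add g ⟨u, hu⟩ ⟨v, hv⟩).trans (by rw [eu, ev, add_zero])
    obtain ⟨_, h5⟩ := h4 y h2
    exact congrArg Subtype.val h5
  obtain ⟨e, he⟩ := Module.Injective.out ((LinearMap.ker j).liftQ j le_rfl)
    (LinearMap.ker_eq_bot.1 (Submodule.ker_liftQ_eq_bot _ _ _ le_rfl))
    ((LinearMap.ker j).liftQ ((tor a E).subtype ∘ₗ g) hker)
  have he' : ∀ y : I, e (j y) = (g y).1 := fun y => he (Submodule.Quotient.mk y)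
  have hmem : e (Submodule.Quotient.mk 1) ∈ tor a E := by
    refine ⟨k + c, fun x hx => ?_⟩
    rw [← map_smul, ← Submodule.Quotient.mk_smul, smul_eq_mul, mul_one,
      (Submodule.Quotient.mk_eq_zero _).2 hx, map_zero]
  refine ⟨LinearMap.toSpanSingleton R _ ⟨_, hmem⟩, ?_⟩
  intro y hy
  apply Subtype.ext
  refine Eq.trans ?_ (he' ⟨y, hy⟩)
  change y • e (Submodule.Quotient.mk 1) = e (Submodule.Quotient.mk y)
  rw [← map_smul, ← Submodule.Quotient.mk_smul, smul_eq_mul, mul_one]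

lemma quot_tor_injective [IsNoetherianRing R] (a : Ideal R) (E : Type u) [AddCommGroup E] [Module R E]
    [Module.Injective R E] : Module.Injective R (E ⧸ tor a E) := by
  have := tor_injective a E
  obtain ⟨r, hr⟩ := Module.Injective.out (tor a E).subtype (Submodule.subtype_injective _)
    (LinearMap.id : tor a E →ₗ[R] tor a E)
  let s : (E ⧸ tor a E) →ₗ[R] E := (tor a E).liftQ (LinearMap.id - (tor a E).subtype ∘ₗ r) (by
    intro x hx
    have := congrArg Subtype.val (hr ⟨x, hx⟩)
    rw [LinearMap.mem_ker, LinearMap.sub_apply, sub_eq_zero]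
    exact this.symm)
  have hs : ∀ x, (tor a E).mkQ (s x) = x := by
    intro x
    obtain ⟨x, rfl⟩ := (tor a E).mkQ_surjective x
    change (tor a E).mkQ (x - (r x).1) = _
    rw [map_sub]
    have : (tor a E).mkQ (r x).1 = 0 := by
      rw [← LinearMap.mem_ker, Submodule.ker_mkQ]; exact (r x).2
    rw [this, sub_zero]
  refine ⟨fun X Y _ _ _ _ f hf g => ?_⟩
  obtain ⟨h, hh⟩ := Module.Injective.out f hf (s ∘ₗ g)
  exact ⟨(tor a E).mkQ ∘ₗ h, fun x => by rw [LinearMap.comp_apply, hh]; exact hs _⟩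

lemma exists_inj (M : Type u) [AddCommGroup M] [Module R M] :
    ∃ (E : Type u) (_ : AddCommGroup E) (_ : Module R E) (_ : Module.Injective R E) (f : M →ₗ[R] E),
      Function.Injective f := by
  let I : ModuleCat.{u} R := CategoryTheory.Injective.under (ModuleCat.of R M)
  have hI : CategoryTheory.Injective I := inferInstanceAs
    (CategoryTheory.Injective (CategoryTheory.Injective.under (ModuleCat.of R M)))
  have hI' : CategoryTheory.Injective (ModuleCat.of R I) := hI
  refine ⟨I, inferInstance, inferInstance, Module.injective_module_of_injective_object R I,
    (CategoryTheory.Injective.ι (ModuleCat.of R M)).hom,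
    (ModuleCat.mono_iff_injective _).1 inferInstance⟩

lemma exists_inj_tor [IsNoetherianRing R] (a : Ideal R) (M : Type u) [AddCommGroup M] [Module R M]
    (h : IsTor a M) :
    ∃ (E : Type u) (_ : AddCommGroup E) (_ : Module R E) (_ : Module.Injective R E) (f : M →ₗ[R] E),
      Function.Injective f ∧ IsTor a E := by
  obtain ⟨E, _, _, _, f, hf⟩ := exists_inj (R := R) M
  refine ⟨tor a E, inferInstance, inferInstance, tor_injective a E, f.codRestrict _ ?_, ?_, isTor_tor a E⟩
  · intro m
    obtain ⟨k, hk⟩ := h m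
    exact ⟨k, fun x hx => by rw [← map_smul, hk x hx, map_zero]⟩
  · intro x y hxy
    exact hf (congrArg Subtype.val hxy)

lemma exists_inj_tf [IsNoetherianRing R] (a : Ideal R) (M : Type u) [AddCommGroup M] [Module R M]
    (h : TF a M) :
    ∃ (E : Type u) (_ : AddCommGroup E) (_ : Module R E) (_ : Module.Injective R E) (f : M →ₗ[R] E),
      Function.Injective f ∧ TF a E := by
  obtain ⟨E, _, _, _, f, hf⟩ := exists_inj (R := R) M
  refine ⟨E ⧸ tor a E, inferInstance, inferInstance, quot_tor_injective a E,
    (tor a E).mkQ ∘ₗ f, ?_, tf_quot a E⟩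
  rw [← LinearMap.ker_eq_bot, eq_bot_iff]
  intro m hm
  have : f m ∈ tor a E := by
    rw [← (tor a E).ker_mkQ]; exact hm
  obtain ⟨k, hk⟩ := this
  refine h.pow k m fun x hx => hf ?_
  rw [map_smul, hk x hx, map_zero]

end CofAux
end Layer4a

section Layer4b

variable {R : Type u} [CommRing R]

namespace CofAux

/-- postcomposition with a linear map -/
noncomputable def pf (X : ModuleCat.{u} R) {A B : Type u} [AddCommGroup A] [Module R A]
    [AddCommGroup B] [Module R B] (f : A →ₗ[R] B) (i : ℕ) :
    Abelian.Ext X (ModuleCat.of R A) i →ₗ[R] Abelian.Ext X (ModuleCat.of R B) i :=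
  postL X (Abelian.Ext.mk₀ (ModuleCat.ofHom f)) (add_zero i)

lemma res_pf (a : Ideal R) {s t : ℕ} (h : s ≤ t) {A B : Type u} [AddCommGroup A] [Module R A]
    [AddCommGroup B] [Module R B] (f : A →ₗ[R] B) (i : ℕ)
    (α : Abelian.Ext (Xq a s) (ModuleCat.of R A) i) :
    res a h _ i (pf _ f i α) = pf _ f i (res a h _ i α) :=
  res_comp a h α _ (add_zero i)

section
variable {A B C : Type u} [AddCommGroup A] [Module R A]
    [AddCommGroup B] [Module R B] [AddCommGroup C] [Module R C] {f : A →ₗ[R] B} {g : B →ₗ[R] C}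
    (hf : Function.Injective f) (hg : Function.Surjective g) (hfg : Function.Exact f g)

/-- connecting map -/
noncomputable def pd (X : ModuleCat.{u} R) (i : ℕ) :
    Abelian.Ext X (ModuleCat.of R C) i →ₗ[R] Abelian.Ext X (ModuleCat.of R A) (i+1) :=
  postL X (sc_exact f g hf hg hfg).extClass rfl

lemma res_pd (a : Ideal R) {s t : ℕ} (h : s ≤ t) (i : ℕ)
    (α : Abelian.Ext (Xq a s) (ModuleCat.of R C) i) :
    res a h _ (i+1) (pd hf hg hfg _ i α) = pd hf hg hfg _ i (res a h _ i α) :=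
  res_comp a h α (sc_exact f g hf hg hfg).extClass rfl

lemma les1 (X : ModuleCat.{u} R) (i : ℕ) (x : Abelian.Ext X (ModuleCat.of R A) (i+1))
    (hx : pf X f (i+1) x = 0) : ∃ y, pd hf hg hfg X i y = x :=
  Abelian.Ext.covariant_sequence_exact₁ _ (sc_exact f g hf hg hfg) x hx rfl

lemma les2 (hf : Function.Injective f) (hg : Function.Surjective g) (hfg : Function.Exact f g)
    (X : ModuleCat.{u} R) (i : ℕ) (x : Abelian.Ext X (ModuleCat.of R B) i)
    (hx : pf X g i x = 0) : ∃ y, pf X f i y = x :=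
  Abelian.Ext.covariant_sequence_exact₂ _ (sc_exact f g hf hg hfg) x hx

lemma les3 (X : ModuleCat.{u} R) (i : ℕ) (x : Abelian.Ext X (ModuleCat.of R C) i)
    (hx : pd hf hg hfg X i x = 0) : ∃ y, pf X g i y = x :=
  Abelian.Ext.covariant_sequence_exact₃ _ (sc_exact f g hf hg hfg) x rfl hx

lemma pd_pf (X : ModuleCat.{u} R) (i : ℕ) (x : Abelian.Ext X (ModuleCat.of R B) i) :
    pd hf hg hfg X i (pf X g i x) = 0 := by
  have h1 : pd hf hg hfg X i (pf X g i x) =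
    x.comp ((Abelian.Ext.mk₀ (sc f g hfg).g).comp (sc_exact f g hf hg hfg).extClass (zero_add 1))
      rfl := Abelian.Ext.comp_assoc_of_second_deg_zero _ _ _ _
  refine h1.trans ?_
  rw [ShortComplex.ShortExact.comp_extClass]
  exact Abelian.Ext.comp_zero x (sc f g hfg).X₁ 1 (i+1) rfl

lemma pf_pf (hfg : Function.Exact f g) (X : ModuleCat.{u} R) (i : ℕ)
    (x : Abelian.Ext X (ModuleCat.of R A) i) : pf X g i (pf X f i x) = 0 := by
  have h1 : pf X g i (pf X f i x) = x.comp ((Abelian.Ext.mk₀ (ModuleCat.ofHom f)).comp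
      (Abelian.Ext.mk₀ (ModuleCat.ofHom g)) (zero_add 0)) (add_zero i) :=
    Abelian.Ext.comp_assoc_of_second_deg_zero _ _ _ _
  have h2 : ModuleCat.ofHom f ≫ ModuleCat.ofHom g = 0 := (sc f g hfg).zero
  rw [h1, Abelian.Ext.mk₀_comp_mk₀, h2, Abelian.Ext.mk₀_zero, Abelian.Ext.comp_zero]
end

lemma ext_inj_zero (X : ModuleCat.{u} R) (E : Type u) [AddCommGroup E] [Module R E]
    [Module.Injective R E] (i : ℕ) (x : Abelian.Ext X (ModuleCat.of R E) (i+1)) : x = 0 := by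
  have : CategoryTheory.Injective (ModuleCat.of R E) :=
    Module.injective_object_of_injective_module R E
  exact Abelian.Ext.eq_zero_of_injective x

/-- Ext^0 -/
noncomputable def ev (a : Ideal R) (M : Type u) [AddCommGroup M] [Module R M] :
    Abelian.Ext (ModuleCat.of R (R ⧸ a)) (ModuleCat.of R M) 0 ≃ₗ[R] soc a M :=
    Abelian.Ext.linearEquiv₀ (R := R) ≪≫ₗ ModuleCat.homLinearEquiv ≪≫ₗ homEquivSoc a M

lemma ev_mk₀ (a : Ideal R) (M : Type u) [AddCommGroup M] [Module R M]
    (φ : ModuleCat.of R (R ⧸ a) ⟶ ModuleCat.of R M) :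
    (ev a M (Abelian.Ext.mk₀ φ) : M) = φ.hom (1 : R ⧸ a) := by
  have : Abelian.Ext.linearEquiv₀ (R := R) (Abelian.Ext.mk₀ φ) = φ :=
    Abelian.Ext.addEquiv₀.apply_symm_apply φ
  unfold ev
  rw [LinearEquiv.trans_apply, LinearEquiv.trans_apply, this]
  rfl

lemma ev_res (a : Ideal R) {s t : ℕ} (h : s ≤ t) (M : Type u) [AddCommGroup M] [Module R M]
    (α : Abelian.Ext (Xq a s) (ModuleCat.of R M) 0) :
    (ev (a^t) M (res a h _ 0 α) : M) = ev (a^s) M α := by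
  obtain ⟨φ, rfl⟩ := (Abelian.Ext.mk₀_bijective _ _).2 α
  rw [res_apply, Abelian.Ext.mk₀_comp_mk₀, ev_mk₀, ev_mk₀]
  rfl

lemma ev_pf (a : Ideal R) {A B : Type u} [AddCommGroup A] [Module R A]
    [AddCommGroup B] [Module R B] (f : A →ₗ[R] B)
    (α : Abelian.Ext (ModuleCat.of R (R ⧸ a)) (ModuleCat.of R A) 0) :
    (ev a B (pf _ f 0 α) : B) = f (ev a A α) := by
  obtain ⟨φ, rfl⟩ := (Abelian.Ext.mk₀_bijective _ _).2 α
  have : pf _ f 0 (Abelian.Ext.mk₀ φ) = Abelian.Ext.mk₀ (φ ≫ ModuleCat.ofHom f) :=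
    Abelian.Ext.mk₀_comp_mk₀ _ _
  rw [this, ev_mk₀, ev_mk₀]
  rfl

lemma ev_tf (a : Ideal R) (t : ℕ) {M : Type u} [AddCommGroup M] [Module R M] (h : TF a M)
    (α : Abelian.Ext (Xq a t) (ModuleCat.of R M) 0) : α = 0 := by
  apply (ev (a^t) M).injective
  rw [map_zero]
  exact Subtype.ext (h.pow t _ ((mem_soc _).1 (ev (a^t) M α).2))

lemma tor_van [IsNoetherianRing R] (a : Ideal R) (i : ℕ) : ∀ (N : Type u) [AddCommGroup N]
    [Module R N] (_ : IsTor a N) (t : ℕ) (α : Abelian.Ext (Xq a t) (ModuleCat.of R N) (i+1)),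
    ∃ (t' : ℕ) (h : t ≤ t'), res a h _ (i+1) α = 0 := by
  induction i with
  | zero =>
    intro N _ _ hN t α
    obtain ⟨E, _, _, _, f, hf, hE⟩ := exists_inj_tor a N hN
    have hg := (LinearMap.range f).mkQ_surjective
    have hfg := LinearMap.exact_map_mkQ_range f
    obtain ⟨β, rfl⟩ := les1 hf hg hfg _ 0 α (ext_inj_zero _ E 0 _)
    obtain ⟨e, he⟩ := hg (ev (a^t) _ β)
    obtain ⟨k, hk⟩ := hE e
    let t' := max t k
    have hs : e ∈ soc (a^t') E := (mem_soc _).2 fun x hx =>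
      hk x (Ideal.pow_le_pow_right (le_max_right _ _) hx)
    let γ : Abelian.Ext (Xq a t') (ModuleCat.of R E) 0 := (ev (a^t') E).symm ⟨e, hs⟩
    have hγ : pf _ (LinearMap.range f).mkQ 0 γ = res a (le_max_left t k) _ 0 β := by
      apply (ev (a^t') _).injective
      apply Subtype.ext
      rw [ev_pf]
      refine Eq.trans ?_ (ev_res a (le_max_left t k) _ β).symm
      rw [← he]
      simp only [γ, LinearEquiv.apply_symm_apply]
    refine ⟨t', le_max_left _ _, ?_⟩
    rw [res_pd, ← hγ, pd_pf]
  | succ i ih =>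
    intro N _ _ hN t α
    obtain ⟨E, _, _, _, f, hf, hE⟩ := exists_inj_tor a N hN
    have hg := (LinearMap.range f).mkQ_surjective
    have hfg := LinearMap.exact_map_mkQ_range f
    obtain ⟨β, rfl⟩ := les1 hf hg hfg _ (i+1) α (ext_inj_zero _ E _ _)
    obtain ⟨t', h, hβ⟩ := ih _ (hE.of_surj _ hg) t β
    refine ⟨t', h, ?_⟩
    rw [res_pd, hβ, map_zero]

lemma isColim_tor (a : Ideal R) (M : Type u) [AddCommGroup M] [Module R M] :
    ∃ ι, IsColim a 0 (ModuleCat.of R M) (tor a M) ι := by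
  have hle : ∀ t, soc (a^t) M ≤ tor a M := fun t m hm => ⟨t, (mem_soc m).1 hm⟩
  refine ⟨fun t => Submodule.inclusion (hle t) ∘ₗ (ev (a^t) M).toLinearMap, ?_, ?_, ?_⟩
  · intro s t h α
    exact Subtype.ext (ev_res a h M α)
  · rintro ⟨m, t, ht⟩
    refine ⟨t, (ev (a^t) M).symm ⟨m, (mem_soc m).2 ht⟩, ?_⟩
    rw [LinearMap.comp_apply, LinearEquiv.coe_coe, LinearEquiv.apply_symm_apply]
    rfl
  · intro t α h
    have h1 : ev (a^t) M α = 0 := Submodule.inclusion_injective (hle t) (h.trans (map_zero _).symm)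
    have h2 : α = 0 := (ev (a^t) M).injective (h1.trans (map_zero _).symm)
    exact ⟨t, le_rfl, by rw [h2, map_zero]⟩

lemma isColim_unique {a : Ideal R} {i : ℕ} {M : ModuleCat.{u} R} {H H' : Type u} [AddCommGroup H]
    [Module R H] [AddCommGroup H'] [Module R H'] {ι ι'} (h : IsColim a i M H ι)
    (h' : IsColim a i M H' ι') : Nonempty (H ≃ₗ[R] H') := by
  have key : ∀ {H H' : Type u} [AddCommGroup H]
    [Module R H] [AddCommGroup H'] [Module R H'] {ι ι'} (h : IsColim a i M H ι)
    (h' : IsColim a i M H' ι'), ∀ s t α β, ι s α = ι t β → ι' s α = ι' t β := by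
    intro H H' _ _ _ _ ι ι' h h' s t α β hab
    have h0 : ι (max s t) (res a (le_max_left s t) M i α - res a (le_max_right s t) M i β) = 0 := by
      rw [map_sub, h.compat, h.compat, hab, sub_self]
    obtain ⟨t', ht', h1⟩ := h.ker _ _ h0
    rw [map_sub, sub_eq_zero] at h1
    have h2 := congrArg (ι' t') h1
    rwa [h'.compat, h'.compat, h'.compat, h'.compat] at h2
  choose t α hα using h.surj
  choose t' α' hα' using h'.surj
  refine ⟨{ toFun := fun z => ι' (t z) (α z), map_add' := ?_, map_smul' := ?_, 
            invFun := fun z => ι (t' z) (α' z), left_inv := ?_, right_inv := ?_ }⟩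
  · intro x y
    let T := max (t x) (t y)
    have : ι (t (x+y)) (α (x+y)) = ι T (res a (le_max_left _ _) M i (α x) +
        res a (le_max_right _ _) M i (α y)) := by
      rw [map_add, h.compat, h.compat, hα, hα, hα]
    rw [key h h' _ _ _ _ this, map_add, h'.compat, h'.compat]
  · intro r x
    have : ι (t (r • x)) (α (r • x)) = ι (t x) (r • α x) := by
      rw [map_smul, hα, hα]
    rw [key h h' _ _ _ _ this, map_smul, RingHom.id_apply]
  · intro x
    exact (key h' h _ _ _ _ (hα' _)).trans (hα x)
  · intro x
    exact (key h h' _ _ _ _ (hα _)).trans (hα' x)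

lemma isTor_colim {a : Ideal R} {i : ℕ} {M : ModuleCat.{u} R} {H : Type u} [AddCommGroup H]
    [Module R H] {ι} (h : IsColim a i M H ι) : IsTor a H := by
  intro z
  obtain ⟨t, α, rfl⟩ := h.surj z
  exact ⟨t, fun x hx => by rw [← map_smul, smul_ext_zero hx, map_zero]⟩

lemma lc_zero (a : Ideal R) (M : Type u) [AddCommGroup M] [Module R M] :
    Nonempty (tor a M ≃ₗ[R] (localCohomology a 0).obj (ModuleCat.of R M)) := by
  obtain ⟨ι, h⟩ := isColim_tor a M
  obtain ⟨ι', h'⟩ := isColim_localCohomology a 0 (ModuleCat.of R M)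
  exact isColim_unique h h'

lemma lc_succ [IsNoetherianRing R] (a : Ideal R) (n : ℕ) (M E : Type u) [AddCommGroup M] [Module R M]
    [AddCommGroup E] [Module R E] [Module.Injective R E] (hE : TF a E)
    (f : (M ⧸ tor a M) →ₗ[R] E) (hf : Function.Injective f) :
    Nonempty ((localCohomology a n).obj (ModuleCat.of R (E ⧸ LinearMap.range f)) ≃ₗ[R]
      (localCohomology a (n+1)).obj (ModuleCat.of R M)) := by
  obtain ⟨ι, hι⟩ := isColim_localCohomology a n (ModuleCat.of R (E ⧸ LinearMap.range f))
  obtain ⟨ι', h'⟩ := isColim_localCohomology a (n+1) (ModuleCat.of R M)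
  have hg := (LinearMap.range f).mkQ_surjective
  have hfg := LinearMap.exact_map_mkQ_range f
  have hi := (tor a M).subtype_injective
  have hq := (tor a M).mkQ_surjective
  have hiq : Function.Exact (tor a M).subtype (tor a M).mkQ :=
    LinearMap.exact_subtype_mkQ _
  have hbij : ∀ t, Function.Bijective (pd hf hg hfg (Xq a t) n) := by
    intro t
    constructor
    · rw [injective_iff_map_eq_zero]
      intro x hx
      obtain ⟨y, rfl⟩ := les3 hf hg hfg _ n x hx
      have : y = 0 := by
        cases n with
        | zero => exact ev_tf a t hE y
        | succ n => exact ext_inj_zero _ E n y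
      rw [this, map_zero]
    · intro x
      exact les1 hf hg hfg _ n x (ext_inj_zero _ E n _)
  let δ := fun t => LinearEquiv.ofBijective _ (hbij t)
  have hδ : ∀ t x, δ t x = pd hf hg hfg (Xq a t) n x := fun t x => rfl
  have hδs : ∀ s t (h : s ≤ t) x, (δ t).symm (res a h _ _ x) = res a h _ _ ((δ s).symm x) := by
    intro s t h x
    rw [LinearEquiv.symm_apply_eq, hδ, ← res_pd, ← hδ, LinearEquiv.apply_symm_apply]
  let ι₂ : ∀ t, Abelian.Ext (Xq a t) (ModuleCat.of R M) (n+1) →ₗ[R] _ :=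
    fun t => ι t ∘ₗ (δ t).symm.toLinearMap ∘ₗ pf (Xq a t) (tor a M).mkQ (n+1)
  have hι₂ : ∀ t x, ι₂ t x = ι t ((δ t).symm (pf (Xq a t) (tor a M).mkQ (n+1) x)) :=
    fun t x => rfl
  have hc : IsColim a (n+1) (ModuleCat.of R M) _ ι₂ := by
    refine ⟨?_, ?_, ?_⟩
    · intro s t h α
      rw [hι₂, hι₂, ← res_pf, hδs, hι.compat]
    · intro z
      obtain ⟨t, β, rfl⟩ := hι.surj z
      obtain ⟨t', h, h0⟩ := tor_van a (n+1) _ (isTor_tor a M) t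
        (pd hi hq hiq (Xq a t) (n+1) (δ t β))
      rw [res_pd] at h0
      obtain ⟨y, hy⟩ := les3 hi hq hiq _ _ _ h0
      refine ⟨t', y, ?_⟩
      rw [hι₂, hy, hδs, LinearEquiv.symm_apply_apply, hι.compat]
    · intro t α h0
      rw [hι₂] at h0
      obtain ⟨t', h, h1⟩ := hι.ker _ _ h0
      rw [← hδs, LinearEquiv.map_eq_zero_iff, res_pf] at h1
      obtain ⟨y, hy⟩ := les2 hi hq hiq _ _ _ h1
      obtain ⟨t'', h', h2⟩ := tor_van a n _ (isTor_tor a M) t' y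
      refine ⟨t'', h.trans h', ?_⟩
      rw [← res_res a h h', ← hy, res_pf, h2, map_zero]
  exact isColim_unique hc h'

end CofAux
end Layer4b

section Layer5

variable {R : Type u} [CommRing R]

namespace CofAux

lemma fe_tf {a : Ideal R} {M : Type u} [AddCommGroup M] [Module R M] (h : TF a M) :
    FE (ModuleCat.of R (R ⧸ a)) M 0 := by
  rw [fe_zero_iff]
  have : Subsingleton (soc a M) := by
    refine ⟨fun x y => Subtype.ext ?_⟩
    rw [h x.1 ((mem_soc _).1 x.2), h y.1 ((mem_soc _).1 y.2)]
  infer_instance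

lemma fe_tf_inj {a : Ideal R} {M : Type u} [AddCommGroup M] [Module R M] [Module.Injective R M]
    (h : TF a M) (i : ℕ) : FE (ModuleCat.of R (R ⧸ a)) M i := by
  cases i with
  | zero => exact fe_tf h
  | succ i =>
    have : Subsingleton (Abelian.Ext (ModuleCat.of R (R ⧸ a)) (ModuleCat.of R M) (i+1)) :=
      ⟨fun x y => by rw [ext_inj_zero _ M i x, ext_inj_zero _ M i y]⟩
    unfold FE
    infer_instance

lemma cof_tor [IsNoetherianRing R] {a : Ideal R} (hd : DimOne a) (M : Type u) [AddCommGroup M]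
    [Module R M] (h0 : FE (ModuleCat.of R (R ⧸ a)) M 0) (h1 : FE (ModuleCat.of R (R ⧸ a)) M 1) :
    Cof a (tor a M) := by
  refine theoremA hd (isTor_tor a M) (fe_zero_inj (tor a M).subtype (Subtype.val_injective) h0) ?_
  exact fe_left (tor a M).subtype (tor a M).mkQ (Subtype.val_injective) (tor a M).mkQ_surjective
    (LinearMap.exact_subtype_mkQ _) (fe_tf (tf_quot a M)) h1

lemma claim [IsNoetherianRing R] {a : Ideal R} (hd : DimOne a) (n : ℕ) : ∀ (M : Type u)
    [AddCommGroup M] [Module R M] (_ : ∀ i ≤ n + 1, FE (ModuleCat.of R (R ⧸ a)) M i),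
    Cof a ((localCohomology a n).obj (ModuleCat.of R M)) := by
  induction n with
  | zero =>
    intro M _ _ h
    obtain ⟨e⟩ := lc_zero a M
    exact fun i => fe_equiv e (cof_tor hd M (h 0 (by omega)) (h 1 (by omega)) i)
  | succ n ih =>
    intro M _ _ h
    have hT := cof_tor hd M (h 0 (by omega)) (h 1 (by omega))
    obtain ⟨E, _, _, _, f, hf, hE⟩ := exists_inj_tf a _ (tf_quot a M)
    obtain ⟨e⟩ := lc_succ a n M E hE f hf
    have hL : Cof a ((localCohomology a n).obj (ModuleCat.of R (E ⧸ LinearMap.range f))) := by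
      apply ih
      intro i hi
      refine fe_right f (LinearMap.range f).mkQ hf (Submodule.mkQ_surjective _)
        (LinearMap.exact_map_mkQ_range f) (fe_tf_inj hE i) ?_
      exact fe_right (tor a M).subtype (tor a M).mkQ (Subtype.val_injective)
        (tor a M).mkQ_surjective (LinearMap.exact_subtype_mkQ _) (h (i+1) (by omega)) (hT _)
    exact fun i => fe_equiv e (hL i)

lemma dimOne_of {a : Ideal R} (h : ringKrullDim (R ⧸ a) = 1) : DimOne a := by
  intro q p hq hp haq hqp
  by_contra hmax
  obtain ⟨m, hm, hpm⟩ := p.exists_le_maximal hp.ne_top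
  have hlt : p < m := lt_of_le_of_ne hpm (fun h => hmax (h ▸ hm))
  let F : ∀ (I : Ideal R) (_ : I.IsPrime) (_ : a ≤ I), PrimeSpectrum (R ⧸ a) := fun I hI h =>
    ⟨I.map (Ideal.Quotient.mk a), Ideal.map_isPrime_of_surjective Ideal.Quotient.mk_surjective
      (by rwa [Ideal.mk_ker])⟩
  have hF : ∀ I J hI hJ h h', I < J → F I hI h < F J hJ h' := by
    intro I J hI hJ h h' hIJ
    change Ideal.map _ I < Ideal.map _ J
    refine lt_of_le_not_ge (Ideal.map_mono hIJ.le) fun hle => hIJ.not_ge ?_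
    have := Ideal.comap_mono (f := Ideal.Quotient.mk a) hle
    rwa [Ideal.comap_map_of_surjective _ Ideal.Quotient.mk_surjective,
      Ideal.comap_map_of_surjective _ Ideal.Quotient.mk_surjective,
      ← RingHom.ker_eq_comap_bot, Ideal.mk_ker, sup_eq_left.2 h, sup_eq_left.2 h'] at this
  have h1 := hF q p hq hp haq (haq.trans hqp.le) hqp
  have h2 := hF p m hp hm.isPrime (haq.trans hqp.le) (haq.trans (hqp.le.trans hpm)) hlt
  let s : LTSeries (PrimeSpectrum (R ⧸ a)) :=
    { length := 2
      toFun := ![F q hq haq, F p hp (haq.trans hqp.le),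
        F m hm.isPrime (haq.trans (hqp.le.trans hpm))]
      step := by
        intro i
        fin_cases i
        · exact h1
        · exact h2 }
  have h3 := Order.LTSeries.length_le_krullDim s
  rw [← ringKrullDim, h] at h3
  have h4 : s.length = 2 := rfl
  rw [h4] at h3
  exact absurd h3 (by decide)

lemma supp_of_tor {a : Ideal R} {N : Type u} [AddCommGroup N] [Module R N] (h : IsTor a N) :
    Module.support R N ⊆ PrimeSpectrum.zeroLocus (a : Set R) := by
  intro p hp x hx
  rw [Module.mem_support_iff_exists_annihilator] at hp
  obtain ⟨m, hm⟩ := hp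
  obtain ⟨k, hk⟩ := h.pow hx m
  refine p.isPrime.mem_of_pow_mem k (hm ?_)
  rw [Submodule.mem_annihilator_span_singleton]
  exact hk

end CofAux
end Layer5

theorem stmt7 [IsNoetherianRing R] (𝔞 : Ideal R) (M : ModuleCat.{u} R)
    (hdim : ringKrullDim (R ⧸ 𝔞) = 1)
    (h : ∀ i : ℕ, (i : ℕ∞) ≤ cohomologicalDim R 𝔞 M + 1 →
      Module.Finite R (extModule R i (ModuleCat.of R (R ⧸ 𝔞)) M)) :
    ∀ i : ℕ, IsCofinite R 𝔞 ((localCohomology 𝔞 i).obj M) := by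
  intro i
  obtain ⟨ι, hι⟩ := CofAux.isColim_localCohomology 𝔞 i M
  refine ⟨CofAux.supp_of_tor (CofAux.isTor_colim hι), ?_⟩
  suffices hc : CofAux.Cof 𝔞 ((localCohomology 𝔞 i).obj M) by
    intro j
    have hj : Module.Finite R (Abelian.Ext (ModuleCat.of R (R ⧸ 𝔞))
      ((localCohomology 𝔞 i).obj M) j) := hc j
    exact Module.Finite.equiv (CofAux.extEquiv j _ _).symm
  by_cases hn : Nontrivial ((localCohomology 𝔞 i).obj M)
  · refine CofAux.claim (CofAux.dimOne_of hdim) i M ?_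
    intro j hj
    have hle : (i : ℕ∞) ≤ cohomologicalDim R 𝔞 M :=
      le_iSup₂ (f := fun (k : ℕ) (_ : k ∈ {i : ℕ | Nontrivial ((localCohomology 𝔞 i).obj M)}) =>
        (k : ℕ∞)) i hn
    have hj' : (j : ℕ∞) ≤ cohomologicalDim R 𝔞 M + 1 :=
      le_trans (by exact_mod_cast hj) (add_le_add_left hle 1)
    have := h j hj'
    exact Module.Finite.equiv (CofAux.extEquiv j (ModuleCat.of R (R ⧸ 𝔞)) M)
  · have : Subsingleton ((localCohomology 𝔞 i).obj M) := not_nontrivial_iff_subsingleton.1 hn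
    exact fun j => CofAux.fe_subsingleton _ _ j
end

section
/- Let R be a Noetherian ring, M an R-module, and N, L finitely generated R-modules with Supp(L) ⊆ Supp(N). If Ext^i_R(N, M) is finitely generated for all i ≥ 0, then Ext^i_R(L, M) is finitely generated for all i ≥ 0. -/
open CategoryTheory

universe u

variable (R : Type u) [CommRing R]

section bridge
variable {R}
open Abelian

lemma extMk_zero_eq_zero_iff {X Y : ModuleCat.{u} R} (P : ProjectiveResolution X)
    (f : P.complex.X 0 ⟶ Y) (hf : P.complex.d 1 0 ≫ f = 0) :
    P.extMk f 1 rfl hf = 0 ↔ f = 0 := by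
  refine ⟨fun h => ?_, fun h => by subst h; simp⟩
  simp only [← P.extEquivCohomologyClass.apply_eq_iff_eq,
    ProjectiveResolution.extEquivCohomologyClass_extMk,
    ProjectiveResolution.extEquivCohomologyClass_zero,
    CochainComplex.HomComplex.CohomologyClass.mk_eq_zero_iff] at h
  rw [CochainComplex.HomComplex.Cocycle.toSingleMk_mem_coboundaries_iff _ _ _ _ _ 1 (by simp)] at h
  obtain ⟨g, hg⟩ := h
  have hz : Limits.IsZero (P.cochainComplex.X 1) :=
    P.cochainComplex.isZero_of_isStrictlyLE 0 1 (by simp)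
  rw [hz.eq_of_src g 0, Limits.comp_zero] at hg
  rw [← cancel_epi (P.cochainComplexXIso (-(0:ℕ)) 0 rfl).hom]
  simpa using hg.symm

/-- The map from cocycles of a projective resolution to `Ext`. -/
noncomputable def extOfCocycle {X Y : ModuleCat.{u} R} (P : ProjectiveResolution X) (n : ℕ) :
    LinearMap.ker (Linear.leftComp R Y (P.complex.d (n+1) n)) →ₗ[R] Ext X Y n where
  toFun f := P.extMk f.1 (n+1) rfl (LinearMap.mem_ker.1 f.2)
  map_add' f g := (P.add_extMk f.1 g.1 (n+1) rfl _ _).symm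
  map_smul' r f := by
    have := P.extMk_comp_mk₀ f.1 (n+1) rfl (LinearMap.mem_ker.1 f.2) (r • 𝟙 Y)
    rw [RingHom.id_apply, Ext.smul_eq_comp_mk₀]
    refine Eq.trans ?_ this.symm
    simp

lemma extOfCocycle_surjective {X Y : ModuleCat.{u} R} (P : ProjectiveResolution X) (n : ℕ) :
    Function.Surjective (extOfCocycle (Y := Y) P n) := by
  intro α
  obtain ⟨f, hf, h⟩ := P.extMk_surjective α (n+1) rfl
  exact ⟨⟨f, hf⟩, h⟩

lemma finite_extModule_iff (n : ℕ) (X Y : ModuleCat.{u} R) :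
    Module.Finite R (extModule R n X Y) ↔ Module.Finite R (Ext X Y n) := by
  have P : ProjectiveResolution X := Classical.choice HasProjectiveResolution.out
  let K := P.complex.linearYonedaObj R Y
  let i := (ComplexShape.up ℕ).prev n
  let S := K.sc' i n (n + 1)
  have e1 : Module.Finite R (extModule R n X Y) ↔ Module.Finite R S.moduleCatLeftHomologyData.H :=
    Module.Finite.equiv_iff
      (P.isoExt (R := R) n Y ≪≫ ShortComplex.homologyMapIso (K.isoSc' i n (n+1) rfl (by simp)) ≪≫
        S.moduleCatHomologyIso).toLinearEquiv
  rw [e1]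
  let φ : LinearMap.ker S.g.hom →ₗ[R] Ext X Y n := extOfCocycle (Y := Y) P n
  have hφ : Function.Surjective φ := extOfCocycle_surjective P n
  have hk : LinearMap.range S.moduleCatToCycles = LinearMap.ker φ := by
    ext f
    rw [LinearMap.mem_ker]
    constructor
    · rintro ⟨g, rfl⟩
      cases n with
      | zero =>
        refine (extMk_zero_eq_zero_iff P _ (LinearMap.mem_ker.1 (S.moduleCatToCycles g).2)).2 ?_
        change P.complex.d 0 i ≫ g = 0
        rw [P.complex.shape _ _ (by simp)]
        exact Limits.zero_comp
      | succ m =>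
        refine (P.extMk_eq_zero_iff _ _ rfl (LinearMap.mem_ker.1 (S.moduleCatToCycles g).2) m rfl).2 ?_
        have : i = m := by simp [i]
        have key : ∀ j (_ : j = m) (k : P.complex.X j ⟶ Y),
            ∃ k' : P.complex.X m ⟶ Y, P.complex.d (m+1) m ≫ k' = P.complex.d (m+1) j ≫ k := by
          rintro j rfl k
          exact ⟨k, rfl⟩
        exact key i this g
    · intro h
      cases n with
      | zero =>
        have h' : f.1 = 0 := (extMk_zero_eq_zero_iff P _ (LinearMap.mem_ker.1 f.2)).1 h
        exact ⟨0, Subtype.ext (by rw [h', map_zero]; rfl)⟩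
      | succ m =>
        obtain ⟨g, hg⟩ := (P.extMk_eq_zero_iff _ _ rfl (LinearMap.mem_ker.1 f.2) m rfl).1 h
        have : i = m := by simp [i]
        have hh : ∃ g : P.complex.X i ⟶ Y, P.complex.d (m+1) i ≫ g = f.1 := by
          rw [this]; exact ⟨g, hg⟩
        obtain ⟨g, hg⟩ := hh
        exact ⟨g, Subtype.ext hg⟩
  exact Module.Finite.equiv_iff ((Submodule.quotEquivOfEq _ _ hk).trans
    (φ.quotKerEquivOfSurjective hφ))
end bridge

section main
variable {R} [IsNoetherianRing R]
open Abelian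

lemma finite_of_exact {A B C : Type*} [AddCommGroup A] [AddCommGroup B] [AddCommGroup C]
    [Module R A] [Module R B] [Module R C] (f : A →ₗ[R] B) (g : B →ₗ[R] C)
    (h : ∀ x, g x = 0 → ∃ y, f y = x) (hA : Module.Finite R A) (hC : Module.Finite R C) :
    Module.Finite R B := by
  rw [Module.finite_def]
  refine Submodule.fg_of_fg_map_of_fg_inf_ker g (IsNoetherian.noetherian _) ?_
  rw [top_inf_eq]
  have hle : LinearMap.ker g ≤ LinearMap.range f := fun x hx => h x hx
  have : Module.Finite R (LinearMap.range f) := inferInstance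
  have : IsNoetherian R (LinearMap.range f) := inferInstance
  have := isNoetherian_of_le hle
  exact Module.Finite.iff_fg.1 inferInstance

lemma ext_mid {S : ShortComplex (ModuleCat.{u} R)} (hS : S.ShortExact) (M : ModuleCat.{u} R)
    (n : ℕ) (h1 : Module.Finite R (Ext S.X₁ M n)) (h3 : Module.Finite R (Ext S.X₃ M n)) :
    Module.Finite R (Ext S.X₂ M n) :=
  finite_of_exact ((Ext.mk₀ S.g).precompOfLinear R M (zero_add n))
    ((Ext.mk₀ S.f).precompOfLinear R M (zero_add n))
    (fun x hx => Ext.contravariant_sequence_exact₂ hS M x hx) h3 h1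

lemma ext_quot_succ {S : ShortComplex (ModuleCat.{u} R)} (hS : S.ShortExact) (M : ModuleCat.{u} R)
    (n : ℕ) (h1 : Module.Finite R (Ext S.X₁ M n)) (h2 : Module.Finite R (Ext S.X₂ M (n+1))) :
    Module.Finite R (Ext S.X₃ M (n+1)) :=
  finite_of_exact (hS.extClass.precompOfLinear R M (add_comm 1 n))
    ((Ext.mk₀ S.g).precompOfLinear R M (zero_add (n+1)))
    (fun x hx => Ext.contravariant_sequence_exact₃ hS M x hx (add_comm 1 n)) h1 h2

lemma ext_quot_zero {S : ShortComplex (ModuleCat.{u} R)} (hS : S.ShortExact) (M : ModuleCat.{u} R)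
    (h2 : Module.Finite R (Ext S.X₂ M 0)) :
    Module.Finite R (Ext S.X₃ M 0) := by
  have := hS.epi_g
  exact Module.Finite.of_injective ((Ext.mk₀ S.g).precompOfLinear R M (zero_add 0))
    (Ext.precomp_mk₀_injective_of_epi M S.g)

/-- A nonzero map to `R/p` for `p` in the support. -/
lemma exists_ne_zero_hom (N : Type u) [AddCommGroup N] [Module R N] [Module.Finite R N]
    (p : PrimeSpectrum R) (hp : p ∈ Module.support R N) :
    ∃ f : N →ₗ[R] R ⧸ p.asIdeal, f ≠ 0 := by
  by_contra! h
  have hs : Subsingleton (N →ₗ[R] R ⧸ p.asIdeal) := ⟨fun a b => by rw [h a, h b]⟩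
  obtain ⟨r, hr, hreg⟩ := IsSMulRegular.subsingleton_linearMap_iff.1 hs
  have hrp := Module.mem_support_iff_of_finite.1 hp hr
  have h1 : (1 : R ⧸ p.asIdeal) = 0 := by
    apply hreg
    change r • (1 : R ⧸ p.asIdeal) = r • (0 : R ⧸ p.asIdeal)
    rw [smul_zero, Algebra.smul_def, mul_one]
    exact Ideal.Quotient.eq_zero_iff_mem.2 hrp
  exact one_ne_zero h1

lemma ext_finite_of_primes (M : ModuleCat.{u} R) (n : ℕ) (T : Set (PrimeSpectrum R))
    (hT : ∀ p ∈ T, Module.Finite R (Ext (ModuleCat.of R (R ⧸ p.asIdeal)) M n))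
    (X : Type u) [AddCommGroup X] [Module R X] [hX : Module.Finite R X]
    (hs : Module.support R X ⊆ T) : Module.Finite R (Ext (ModuleCat.of R X) M n) := by
  induction hX using IsNoetherianRing.induction_on_isQuotientEquivQuotientPrime R with
  | subsingleton N =>
    have : Subsingleton (Ext (ModuleCat.of R N) M n) := by
      refine subsingleton_of_forall_eq 0 fun x => ?_
      rw [← Ext.mk₀_id_comp x, (ModuleCat.isZero_of_subsingleton (ModuleCat.of R N)).eq_of_src
        (𝟙 _) 0, Ext.mk₀_zero, Ext.zero_comp]
    infer_instance
  | quotient N p e =>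
    have hp : p ∈ T := by
      apply hs
      rw [e.support_eq, Module.mem_support_iff_of_finite, Ideal.annihilator_quotient]
    have := hT p hp
    let i : ModuleCat.of R N ≅ ModuleCat.of R (R ⧸ p.asIdeal) := e.toModuleIso
    refine Module.Finite.of_surjective ((Ext.mk₀ i.hom).precompOfLinear R M (zero_add n)) ?_
    intro x
    refine ⟨(Ext.mk₀ i.inv).comp x (zero_add n), ?_⟩
    change (Ext.mk₀ i.hom).comp ((Ext.mk₀ i.inv).comp x (zero_add n)) (zero_add n) = x
    simp
  | exact N₁ N₂ N₃ f g hf hg hfg h₁ h₃ =>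
    rw [Module.support_of_exact hfg hf hg, Set.union_subset_iff] at hs
    let S : ShortComplex (ModuleCat.{u} R) := ShortComplex.mk (ModuleCat.ofHom f) (ModuleCat.ofHom g)
      (by ext x; exact hfg.apply_apply_eq_zero x)
    have hS : S.ShortExact :=
      { exact := (ShortComplex.ShortExact.moduleCat_exact_iff_function_exact S).2 hfg
        mono_f := (ModuleCat.mono_iff_injective _).2 hf
        epi_g := (ModuleCat.epi_iff_surjective _).2 hg }
    exact ext_mid hS M n (h₁ hs.1) (h₃ hs.2)

lemma ext_step (M : ModuleCat.{u} R) (n : ℕ) (N : Type u) [AddCommGroup N] [Module R N]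
    [Module.Finite R N]
    (hq : ∀ (X : Type u) [AddCommGroup X] [Module R X] [Module.Finite R X] (f : N →ₗ[R] X),
      Function.Surjective f → Module.Finite R (Ext (ModuleCat.of R X) M n))
    (p : PrimeSpectrum R) (hp : p ∈ Module.support R N) :
    Module.Finite R (Ext (ModuleCat.of R (R ⧸ p.asIdeal)) M n) := by
  have : WellFoundedGT (PrimeSpectrum R) :=
    ⟨Subrelation.wf (fun {a b} (h : a > b) => (h : b.asIdeal < a.asIdeal))
      (InvImage.wf PrimeSpectrum.asIdeal (wellFounded_gt (α := Ideal R)))⟩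
  induction p using WellFoundedGT.induction with
  | ind p ih =>
  obtain ⟨f, hf⟩ := exists_ne_zero_hom N p hp
  let Q := (R ⧸ p.asIdeal) ⧸ LinearMap.range f
  have hS := LinearMap.shortExact_shortComplexKer (f := (LinearMap.range f).mkQ)
    (Submodule.mkQ_surjective _)
  refine ext_mid hS M n ?_ ?_
  · refine hq _ (LinearMap.codRestrict (LinearMap.ker (LinearMap.range f).mkQ) f (by simp)) ?_
    rintro ⟨y, hy⟩
    rw [Submodule.ker_mkQ] at hy
    obtain ⟨x, rfl⟩ := hy
    exact ⟨x, rfl⟩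
  · refine ext_finite_of_primes M n {q | p < q} (fun q hq => ih q hq ?_) Q ?_
    · exact Module.mem_support_mono hq.le hp
    · intro q hq
      have hle : p ≤ q := by
        have := Module.support_subset_of_surjective (LinearMap.range f).mkQ
          (Submodule.mkQ_surjective _) hq
        rwa [Module.mem_support_iff_of_finite, Ideal.annihilator_quotient] at this
      refine lt_of_le_of_ne hle ?_
      rintro rfl
      apply hf
      ext x
      by_contra hx
      obtain ⟨a, ha⟩ := Ideal.Quotient.mk_surjective (f x)
      have hap : a ∉ p.asIdeal := fun h => hx (by
        rw [← ha]; exact Ideal.Quotient.eq_zero_iff_mem.2 h)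
      refine hap (Module.mem_support_iff_of_finite.1 hq ?_)
      rw [Module.mem_annihilator]
      intro y
      obtain ⟨y, rfl⟩ := Submodule.mkQ_surjective _ y
      obtain ⟨b, rfl⟩ := Ideal.Quotient.mk_surjective y
      rw [← map_smul, Submodule.mkQ_apply, Submodule.Quotient.mk_eq_zero]
      refine ⟨b • x, ?_⟩
      rw [map_smul, ← ha, Algebra.smul_def, Algebra.smul_def, mul_comm]
      rfl

lemma ext_finite_main (M : ModuleCat.{u} R) (N : Type u) [AddCommGroup N] [Module R N]
    [Module.Finite R N] (h : ∀ i, Module.Finite R (Ext (ModuleCat.of R N) M i)) (n : ℕ) :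
    ∀ (X : Type u) [AddCommGroup X] [Module R X] [Module.Finite R X],
      Module.support R X ⊆ Module.support R N →
      Module.Finite R (Ext (ModuleCat.of R X) M n) := by
  induction n with
  | zero =>
    intro X _ _ _ hs
    refine ext_finite_of_primes M 0 _ (ext_step M 0 N ?_) X hs
    intro Y _ _ _ f hf
    exact ext_quot_zero (LinearMap.shortExact_shortComplexKer hf) M (h 0)
  | succ n ih =>
    intro X _ _ _ hs
    refine ext_finite_of_primes M (n+1) _ (ext_step M (n+1) N ?_) X hs
    intro Y _ _ _ f hf
    exact ext_quot_succ (LinearMap.shortExact_shortComplexKer hf) M n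
      (ih _ (Module.support_subset_of_injective (LinearMap.ker f).subtype
        (Submodule.injective_subtype _))) (h (n+1))

end main

theorem stmt8 [IsNoetherianRing R] (M N L : ModuleCat.{u} R)
    [Module.Finite R N] [Module.Finite R L]
    (hsupp : Module.support R L ⊆ Module.support R N)
    (h : ∀ i : ℕ, Module.Finite R (extModule R i N M)) :
    ∀ i : ℕ, Module.Finite R (extModule R i L M) := by
  intro i
  rw [finite_extModule_iff]
  exact ext_finite_main M N (fun i => (finite_extModule_iff i N M).1 (h i)) i L hsupp
end
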